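/- arXiv:1410.4128 — 4 statements merged into one kernel-verified Lean document; each statement's English description precedes it below -/
import Mathlib

section
/- Let f : Q0 = [0,1]^n → ℝ be integrable with finite dyadic BMO seminorm ‖f‖_{*,D}, and let f_d be its nonincreasing rearrangement on (0,1]. Then f_d belongs to BMO((0,1]) and ‖f_d‖_* ≤ 2^n ‖f‖_{*,D}; that is, for every subinterval J ⊆ (0,1] with |J| > 0, (1/|J|)∫_J |f_d(u) − (f_d)_J| du ≤ 2^n ‖f‖_{*,D}. -/
open MeasureTheory Set Real

noncomputable section

/-- The unit cube `Q₀ = [0,1]ⁿ` in `ℝⁿ`. -/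
def Q0 (n : ℕ) : Set (Fin n → ℝ) := Set.Icc 0 1

/-- The integral average `f_Q = (1/|Q|) ∫_Q f` of `f` over `Q`. -/
def avgOn {n : ℕ} (f : (Fin n → ℝ) → ℝ) (Q : Set (Fin n → ℝ)) : ℝ :=
  (volume Q).toReal⁻¹ * ∫ x in Q, f x

/-- The mean oscillation `Ω(f,Q) = (1/|Q|) ∫_Q |f - f_Q|` of `f` over `Q`. -/
def oscOn {n : ℕ} (f : (Fin n → ℝ) → ℝ) (Q : Set (Fin n → ℝ)) : ℝ :=
  (volume Q).toReal⁻¹ * ∫ x in Q, |f x - avgOn f Q|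

/-- `Q` is a dyadic subcube of `[0,1]ⁿ` of side length `2⁻ᵏ`,
i.e. `Q = ∏ᵢ [mᵢ 2⁻ᵏ, (mᵢ+1) 2⁻ᵏ]` with `0 ≤ mᵢ < 2ᵏ`. -/
def IsDyadicSide (n k : ℕ) (Q : Set (Fin n → ℝ)) : Prop :=
  ∃ m : Fin n → ℕ, (∀ i, m i < 2 ^ k) ∧
    Q = Set.Icc (fun i => (m i : ℝ) / 2 ^ k) (fun i => ((m i : ℝ) + 1) / 2 ^ k)

/-- `Q` belongs to the family `𝒟` of dyadic subcubes of `[0,1]ⁿ`. -/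
def IsDyadic (n : ℕ) (Q : Set (Fin n → ℝ)) : Prop := ∃ k, IsDyadicSide n k Q

/-- One-dimensional integral average `g_J` over a set `J ⊆ ℝ`. -/
def avgI (g : ℝ → ℝ) (J : Set ℝ) : ℝ := (volume J).toReal⁻¹ * ∫ u in J, g u

/-- One-dimensional mean oscillation `Ω(g,J)` over a set `J ⊆ ℝ`. -/
def oscI (g : ℝ → ℝ) (J : Set ℝ) : ℝ :=
  (volume J).toReal⁻¹ * ∫ u in J, |g u - avgI g J|

/-- `g : (0,1] → ℝ` is the nonincreasing, left-continuous rearrangement of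
`f : [0,1]ⁿ → ℝ`, i.e. it is nonincreasing, left continuous and equimeasurable with `f`. -/
def IsRearrangement {n : ℕ} (f : (Fin n → ℝ) → ℝ) (g : ℝ → ℝ) : Prop :=
  AntitoneOn g (Set.Ioc 0 1) ∧
  (∀ t ∈ Set.Ioc (0:ℝ) 1, ContinuousWithinAt g (Set.Iio t) t) ∧
  ∀ lam : ℝ, volume {t ∈ Set.Ioc (0:ℝ) 1 | lam < g t} = volume {x ∈ Q0 n | lam < f x}

/-- The Hardy average `F(t) = (1/t) ∫_0^t g(u) du`. -/
def hardyAvg (g : ℝ → ℝ) (t : ℝ) : ℝ := t⁻¹ * ∫ u in Set.Ioc (0:ℝ) t, g u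

/-- The Gurov–Reshetnyak modulus
`v(f;σ) = sup { Ω(f,Q)/f_Q : Q ∈ 𝒟, ℓ(Q) ≤ σ, f_Q > 0 }` (equal to `0` if no such `Q` exists,
by the convention `sSup ∅ = 0` in `ℝ`). -/
def vGR {n : ℕ} (f : (Fin n → ℝ) → ℝ) (σ : ℝ) : ℝ :=
  sSup {r : ℝ | ∃ k Q, IsDyadicSide n k Q ∧ ((2:ℝ) ^ k)⁻¹ ≤ σ ∧
    0 < avgOn f Q ∧ r = oscOn f Q / avgOn f Q}

/-- `f` satisfies the dyadic Gurov–Reshetnyak condition `f ∈ GR_𝒟(Q₀,ε)`: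
`f : Q₀ → [0,∞)` is integrable and `Ω(f,Q) ≤ ε f_Q` for every dyadic cube `Q`. -/
def GRcond {n : ℕ} (f : (Fin n → ℝ) → ℝ) (ε : ℝ) : Prop :=
  IntegrableOn f (Q0 n) ∧ (∀ x ∈ Q0 n, 0 ≤ f x) ∧
    ∀ Q, IsDyadic n Q → oscOn f Q ≤ ε * avgOn f Q

lemma ivl {h : ℝ → ℝ} (hi : IntegrableOn h (Ioo 0 1)) {x y : ℝ} (hx : 0 ≤ x) (hxy : x ≤ y) (hy : y ≤ 1) :
    IntervalIntegrable h volume x y := by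
  rw [intervalIntegrable_iff_integrableOn_Ioo_of_le hxy]
  exact hi.mono_set (Ioo_subset_Ioo hx hy)

lemma avg_mono {h : ℝ → ℝ} (hi : IntegrableOn h (Ioo 0 1)) (ha : AntitoneOn h (Ioo 0 1))
    {x p y : ℝ} (hx : 0 ≤ x) (hxp : x ≤ p) (hpy : p ≤ y) (hy : y ≤ 1) :
    (p - x) * (∫ t in p..y, h t) ≤ (y - p) * ∫ t in x..p, h t := by
  rcases hxp.eq_or_lt with rfl | hxp
  · simp
  rcases hpy.eq_or_lt with rfl | hpy
  · simp
  have hp : p ∈ Ioo (0:ℝ) 1 := ⟨by linarith, by linarith⟩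
  have h1 : (∫ t in p..y, h t) ≤ ∫ t in p..y, h p := by
    apply intervalIntegral.integral_mono_on_of_le_Ioo hpy.le (ivl hi hp.1.le hpy.le hy) (by simp)
    intro t ht
    exact ha hp ⟨by linarith [hp.1, ht.1], by linarith [ht.2]⟩ ht.1.le
  have h2 : (∫ t in x..p, h p) ≤ ∫ t in x..p, h t := by
    apply intervalIntegral.integral_mono_on_of_le_Ioo hxp.le (by simp) (ivl hi hx hxp.le hp.2.le)
    intro t ht
    exact ha ⟨by linarith [ht.1], by linarith [hp.2, ht.2]⟩ hp ht.2.le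
  simp only [intervalIntegral.integral_const, smul_eq_mul] at h1 h2
  nlinarith

lemma one_dim {h : ℝ → ℝ} (hi : IntegrableOn h (Ioo 0 1)) (ha : AntitoneOn h (Ioo 0 1))
    {a b r K : ℝ} (h0a : 0 ≤ a) (hab : a < b) (hb : b ≤ 1) (hz : ∫ t in a..b, h t = 0)
    (hr0 : 0 ≤ r) (hr1 : r ≤ 1) (hr : 0 ≤ ∫ t in (0:ℝ)..r, h t)
    (hK0 : 0 ≤ K) (hK : ∫ t in (0:ℝ)..1, max (h t) 0 ≤ K * r) :
    ∫ t in a..b, max (h t) 0 ≤ K * (b - a) := by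
  have hip : IntegrableOn (fun t => max (h t) 0) (Ioo 0 1) := hi.pos_part
  set A := ∫ t in a..b, max (h t) 0 with hA
  set A' := ∫ t in (0:ℝ)..1, max (h t) 0 with hA'
  have hsub : ∀ x y : ℝ, 0 ≤ x → x ≤ y → y ≤ 1 → (∫ t in x..y, max (h t) 0) ≤ A' := by
    intro x y hx hxy hy
    apply intervalIntegral.integral_mono_interval hx hxy hy
    · exact Filter.Eventually.of_forall fun t => le_max_right _ _
    · exact ivl hip le_rfl zero_le_one le_rfl
  have hA0 : 0 ≤ A := intervalIntegral.integral_nonneg hab.le fun t _ => le_max_right _ _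
  have hAA : A ≤ A' := hsub a b h0a hab.le hb
  -- reduce
  suffices H : A * r ≤ (b - a) * A' by
    rcases hr0.eq_or_lt with rfl | hr0
    · have : A = 0 := by linarith
      rw [this]; exact mul_nonneg hK0 (by linarith)
    · have : (b - a) * A' ≤ (b-a) * (K * r) := mul_le_mul_of_nonneg_left hK (by linarith)
      nlinarith
  rcases hA0.eq_or_lt with hA0 | hA0
  · rw [← hA0]; simp only [zero_mul]; exact mul_nonneg (by linarith) (by linarith)
  set S := {t | t ∈ Ioo a b ∧ 0 ≤ h t} with hS
  have hSb : BddAbove S := ⟨b, fun t ht => ht.1.2.le⟩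
  have hSn : S.Nonempty := by
    by_contra hne
    have : A = ∫ t in a..b, (0:ℝ) := by
      rw [hA]
      apply intervalIntegral.integral_congr_Ioo_of_le hab.le
      intro t ht
      have : ¬ (0 ≤ h t) := fun h' => hne ⟨t, ht, h'⟩
      exact max_eq_right (by linarith)
    simp at this; linarith
  set c := sSup S with hc
  have hac : a < c := by
    obtain ⟨t, ht⟩ := hSn
    exact ht.1.1.trans_le (le_csSup hSb ht)
  have hcb' : c ≤ b := csSup_le hSn fun t ht => ht.1.2.le
  have hpos : ∀ t, 0 < t → t < c → 0 ≤ h t := by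
    intro t h0 htc
    obtain ⟨s, hs, hts⟩ := exists_lt_of_lt_csSup hSn htc
    exact hs.2.trans (ha ⟨h0, by linarith [hs.1.2]⟩ ⟨by linarith, by linarith [hs.1.2]⟩ hts.le)
  have hcb : c < b := by
    refine lt_of_le_of_ne hcb' fun he => ?_
    have : A = ∫ t in a..b, h t := by
      rw [hA]
      apply intervalIntegral.integral_congr_Ioo_of_le hab.le
      intro t ht
      exact max_eq_left (hpos t (by linarith [ht.1]) (by linarith [ht.2]))
    linarith
  have hneg : ∀ t, c < t → t < b → h t ≤ 0 := by
    intro t hct htb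
    by_contra hh
    have : t ≤ c := le_csSup hSb ⟨⟨by linarith, htb⟩, by linarith⟩
    linarith
  have hpe : ∀ x, 0 ≤ x → x ≤ c → (∫ t in x..c, max (h t) 0) = ∫ t in x..c, h t := by
    intro x hx hxc
    apply intervalIntegral.integral_congr_Ioo_of_le hxc
    intro t ht
    exact max_eq_left (hpos t (by linarith [ht.1]) ht.2)
  have hAc : A = ∫ t in a..c, h t := by
    rw [← hpe a h0a hac.le, hA, ← intervalIntegral.integral_add_adjacent_intervals
      (ivl hip h0a hac.le (by linarith)) (ivl hip (by linarith) hcb.le hb)]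
    have : ∫ t in c..b, max (h t) 0 = ∫ t in c..b, (0:ℝ) := by
      apply intervalIntegral.integral_congr_Ioo_of_le hcb.le
      intro t ht
      exact max_eq_right (hneg t ht.1 ht.2)
    rw [this]; simp
  have hAb : ∫ t in c..b, h t = -A := by
    have := intervalIntegral.integral_add_adjacent_intervals
      (ivl hi h0a hac.le (by linarith)) (ivl hi (by linarith) hcb.le hb)
    linarith
  have h0c : ∫ t in (0:ℝ)..c, h t ≤ A' := by
    rw [← hpe 0 le_rfl (by linarith)]
    exact hsub 0 c le_rfl (by linarith) (by linarith)
  have hs1 := intervalIntegral.integral_add_adjacent_intervals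
      (ivl hi le_rfl h0a (by linarith)) (ivl hi h0a hac.le (by linarith))
  have e1 := avg_mono hi ha le_rfl h0a hac.le (by linarith)
  have k1 : c * A ≤ (c - a) * A' := by
    have : (c - a) * (∫ t in (0:ℝ)..c, h t) ≤ (c - a) * A' := mul_le_mul_of_nonneg_left h0c (by linarith)
    rw [← hs1, ← hAc] at this
    rw [← hAc] at e1
    nlinarith
  rcases le_total r b with hrb | hrb
  · have q1 : (b - a) * (c * A) ≤ (b - a) * ((c - a) * A') := mul_le_mul_of_nonneg_left k1 (by linarith)
    have q2 : r * A ≤ b * A := mul_le_mul_of_nonneg_right hrb hA0.le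
    have q3 : (c - a) * (b * A) ≤ (b - a) * (c * A) := by
      have : 0 ≤ a * (b - c) * A := mul_nonneg (mul_nonneg h0a (by linarith)) hA0.le
      nlinarith
    have q4 : (c - a) * (b * A) ≤ (c - a) * ((b - a) * A') := by linarith
    have := le_of_mul_le_mul_left q4 (by linarith)
    linarith
  · have e2 := avg_mono hi ha (by linarith) hcb.le hrb hr1
    rw [hAb] at e2
    have hs2 := intervalIntegral.integral_add_adjacent_intervals
      (ivl hi le_rfl (by linarith) (by linarith)) (ivl hi (by linarith) hcb.le hb)
    have hs3 := intervalIntegral.integral_add_adjacent_intervals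
      (ivl hi le_rfl (by linarith) hb) (ivl hi (by linarith) hrb hr1)
    have : (b - c) * (A - ∫ t in b..r, h t) ≤ (b - c) * A' :=
      mul_le_mul_of_nonneg_left (by linarith) (by linarith)
    nlinarith

/-- Half-open dyadic cubes. -/
def hcube {n : ℕ} (k : ℕ) (m : Fin n → ℕ) : Set (Fin n → ℝ) :=
  Set.pi univ fun i => Ico ((m i : ℝ) / 2 ^ k) (((m i : ℝ) + 1) / 2 ^ k)

/-- Closed dyadic cubes. -/
def ccube {n : ℕ} (k : ℕ) (m : Fin n → ℕ) : Set (Fin n → ℝ) :=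
  Set.Icc (fun i => (m i : ℝ) / 2 ^ k) (fun i => ((m i : ℝ) + 1) / 2 ^ k)

/-- Index of the dyadic cube of a point. -/
def didx {n : ℕ} (k : ℕ) (y : Fin n → ℝ) : Fin n → ℕ := fun i => ⌊y i * 2 ^ k⌋₊

lemma hcube_ae {n : ℕ} (k : ℕ) (m : Fin n → ℕ) :
    (hcube k m : Set (Fin n → ℝ)) =ᵐ[volume] ccube k m :=
  Measure.univ_pi_Ico_ae_eq_Icc

lemma hcube_meas {n : ℕ} (k : ℕ) (m : Fin n → ℕ) : MeasurableSet (hcube k m) :=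
  MeasurableSet.univ_pi fun _ => measurableSet_Ico

lemma didx_of_mem {n : ℕ} {k : ℕ} {m : Fin n → ℕ} {y : Fin n → ℝ} (h : y ∈ hcube k m) :
    didx k y = m := by
  funext i
  have := h i (mem_univ i)
  have h2 : (0:ℝ) < 2 ^ k := by positivity
  have e1 := (div_le_iff₀ h2).1 this.1
  have e2 := (lt_div_iff₀ h2).1 this.2
  exact (Nat.floor_eq_iff (le_trans (by positivity) e1)).2 ⟨e1, e2⟩

lemma mem_hcube_didx {n : ℕ} (k : ℕ) {y : Fin n → ℝ} (h : ∀ i, 0 ≤ y i) :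
    y ∈ hcube k (didx k y) := by
  intro i _
  have h2 : (0:ℝ) < 2 ^ k := by positivity
  exact ⟨(div_le_iff₀ h2).2 (Nat.floor_le (mul_nonneg (h i) h2.le)),
    (lt_div_iff₀ h2).2 (Nat.lt_floor_add_one _)⟩

lemma didx_div {n : ℕ} (k j : ℕ) (y : Fin n → ℝ) (i : Fin n) :
    didx (k + j) y i / 2 ^ j = didx k y i := by
  unfold didx
  have := Nat.floor_div_natCast (y i * 2 ^ (k + j)) (2 ^ j)
  rw [← this]
  congr 1
  push_cast
  rw [pow_add]
  field_simp

lemma didx_lt {n : ℕ} (k : ℕ) {y : Fin n → ℝ} (h1 : ∀ i, y i < 1) (i : Fin n) :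
    didx k y i < 2 ^ k := by
  unfold didx
  rw [Nat.floor_lt' (by positivity)]
  push_cast
  have h2 : (0:ℝ) < 2 ^ k := by positivity
  nlinarith [h1 i]

lemma nonneg_of_mem_hcube {n : ℕ} {k : ℕ} {m : Fin n → ℕ} {y : Fin n → ℝ} (h : y ∈ hcube k m)
    (i : Fin n) : 0 ≤ y i := le_trans (by positivity) (h i (mem_univ i)).1

lemma lt_one_of_mem_hcube {n : ℕ} {k : ℕ} {m : Fin n → ℕ} (hm : ∀ i, m i < 2 ^ k)
    {y : Fin n → ℝ} (h : y ∈ hcube k m) (i : Fin n) : y i < 1 := by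
  have h2 : (0:ℝ) < 2 ^ k := by positivity
  refine (h i (mem_univ i)).2.trans_le ((div_le_one h2).2 ?_)
  exact_mod_cast hm i

lemma hcube_sub {n : ℕ} {k : ℕ} {m : Fin n → ℕ} (hm : ∀ i, m i < 2 ^ k) :
    hcube k m ⊆ Q0 n := fun _ hy =>
  ⟨fun i => nonneg_of_mem_hcube hy i, fun i => (lt_one_of_mem_hcube hm hy i).le⟩

lemma hcube_vol {n : ℕ} (k : ℕ) (m : Fin n → ℕ) :
    (volume (hcube k m)).toReal = ((2:ℝ) ^ k)⁻¹ ^ n := by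
  unfold hcube
  rw [Real.volume_pi_Ico_toReal]
  · have : ∀ i, ((m i : ℝ) + 1) / 2 ^ k - (m i : ℝ) / 2 ^ k = ((2:ℝ) ^ k)⁻¹ := by
      intro i; ring
    simp [this]
  · intro i
    dsimp only
    gcongr
    linarith

lemma avgOn_congr {n : ℕ} (f : (Fin n → ℝ) → ℝ) {s t : Set (Fin n → ℝ)} (h : s =ᵐ[volume] t) :
    avgOn f s = avgOn f t := by
  unfold avgOn
  rw [measure_congr h, setIntegral_congr_set h]

lemma oscOn_congr {n : ℕ} (f : (Fin n → ℝ) → ℝ) {s t : Set (Fin n → ℝ)} (h : s =ᵐ[volume] t) :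
    oscOn f s = oscOn f t := by
  unfold oscOn
  rw [measure_congr h, setIntegral_congr_set h, avgOn_congr f h]

lemma ccube_ball {n : ℕ} (k : ℕ) (m : Fin n → ℕ) :
    ccube k m = Metric.closedBall (fun i => ((m i : ℝ) + 1/2) / 2 ^ k) (((2:ℝ) ^ k)⁻¹ / 2) := by
  rw [closedBall_pi _ (by positivity), ccube, ← pi_univ_Icc]
  congr 1
  funext i
  rw [Real.closedBall_eq_Icc]
  congr 1 <;> ring

/-- Lebesgue differentiation along dyadic cubes. -/
lemma dyadic_diff {n : ℕ} (f : (Fin n → ℝ) → ℝ) (hf : IntegrableOn f (Q0 n)) :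
    ∀ᵐ x ∂(volume : Measure (Fin n → ℝ)), (∀ i, 0 ≤ x i) → (∀ i, x i < 1) →
      Filter.Tendsto (fun k => avgOn f (hcube k (didx k x))) Filter.atTop (nhds (f x)) := by
  have hQ : MeasurableSet (Q0 n) := measurableSet_Icc
  have hF : Integrable ((Q0 n).indicator f) := hf.integrable_indicator hQ
  filter_upwards [IsUnifLocDoublingMeasure.ae_tendsto_average (μ := volume) hF.locallyIntegrable 1]
    with x hx h0 h1
  have hx0 : x ∈ Q0 n := ⟨fun i => h0 i, fun i => (h1 i).le⟩
  have H := hx (ι := ℕ) (l := Filter.atTop) (fun k i => ((didx k x i : ℝ) + 1/2) / 2 ^ k)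
    (fun k => ((2:ℝ) ^ k)⁻¹ / 2) ?_ ?_
  · rw [indicator_of_mem hx0] at H
    refine H.congr fun k => ?_
    rw [← ccube_ball, avgOn_congr f (hcube_ae _ _).symm.symm, avgOn, setAverage_eq, smul_eq_mul]
    congr 1
    rw [setIntegral_indicator hQ, ← setIntegral_congr_set (hcube_ae k (didx k x)),
      ← setIntegral_congr_set ((hcube_ae k (didx k x)).inter (Filter.EventuallyEq.refl _ (Q0 n))),
      inter_eq_left.2 (hcube_sub (didx_lt k h1))]
  · rw [tendsto_nhdsWithin_iff]
    constructor
    · have : Filter.Tendsto (fun k : ℕ => ((2:ℝ) ^ k)⁻¹) Filter.atTop (nhds 0) := by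
        simpa using tendsto_pow_atTop_nhds_zero_of_lt_one (r := (2:ℝ)⁻¹) (by norm_num) (by norm_num)
      simpa using this.div_const 2
    · exact Filter.Eventually.of_forall fun k => by
        simp only [mem_Ioi]; positivity
  · refine Filter.Eventually.of_forall fun k => ?_
    rw [one_mul, ← ccube_ball]
    have := mem_hcube_didx k h0
    exact ⟨fun i => (this i (mem_univ i)).1, fun i => (this i (mem_univ i)).2.le⟩

lemma osc_bound {n : ℕ} (f : (Fin n → ℝ) → ℝ) (hf : IntegrableOn f (Q0 n))
    {M α : ℝ} (hM : ∀ Q, IsDyadic n Q → oscOn f Q ≤ M) {k : ℕ} {m : Fin n → ℕ}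
    (hm : ∀ i, m i < 2 ^ k) (hα : avgOn f (hcube k m) ≤ α) :
    ∫ x in hcube k m, max (f x - α) 0 ≤ M / 2 * (volume (hcube k m)).toReal := by
  have hO : oscOn f (hcube k m) ≤ M := by
    rw [oscOn_congr f (hcube_ae k m)]
    exact hM _ ⟨k, m, hm, rfl⟩
  have hfi := hf.mono_set (hcube_sub hm)
  have hv : 0 < (volume (hcube k m)).toReal := by rw [hcube_vol]; positivity
  have hvf : volume (hcube k m) ≠ ⊤ := fun h => by simp [h] at hv
  have hc : ∀ c : ℝ, IntegrableOn (fun _ => c) (hcube k m) := fun c =>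
    integrableOn_const hvf
  set v := (volume (hcube k m)).toReal with hvd
  set β := avgOn f (hcube k m) with hβ
  have hfb : IntegrableOn (fun x => f x - β) (hcube k m) := hfi.sub (hc β)
  have h1 : ∫ x in hcube k m, max (f x - α) 0 ≤
      ∫ x in hcube k m, ((f x - β) + |f x - β|) / 2 := by
    apply setIntegral_mono
    · exact (hfi.sub (hc α)).pos_part
    · exact (hfb.add hfb.abs).div_const 2
    · intro x
      dsimp only
      apply max_le
      · linarith [le_abs_self (f x - β)]
      · linarith [neg_abs_le (f x - β)]
  have h2 : ∫ x in hcube k m, ((f x - β) + |f x - β|) / 2 =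
      (∫ x in hcube k m, |f x - β|) / 2 := by
    rw [integral_div, integral_add hfb hfb.abs, integral_sub hfi (hc β)]
    have : ∫ x in hcube k m, f x = v * β := by
      rw [hβ, avgOn, ← hvd]; field_simp
    simp [this, measureReal_def, ← hvd]
  have h3 : ∫ x in hcube k m, |f x - β| ≤ M * v := by
    rw [oscOn, ← hβ, ← hvd] at hO
    rwa [inv_mul_le_iff₀ hv, mul_comm] at hO
  linarith

lemma calderon_zygmund {n : ℕ} (f : (Fin n → ℝ) → ℝ) (hf : IntegrableOn f (Q0 n))
    {M α : ℝ} (hM : ∀ Q, IsDyadic n Q → oscOn f Q ≤ M) (hα : avgOn f (Q0 n) ≤ α) :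
    ∃ E ⊆ Q0 n, MeasurableSet E ∧ 0 ≤ ∫ x in E, (f x - α) ∧
      ∫ x in Q0 n, max (f x - α) 0 ≤ 2 ^ n * M / 2 * (volume E).toReal := by
  have hQ : MeasurableSet (Q0 n) := measurableSet_Icc
  have hQf : volume (Q0 n) ≠ ⊤ := isCompact_Icc.measure_lt_top.ne
  let child : ℕ → (Fin n → ℕ) → (Fin n → ℕ) → Prop := fun k m m' =>
    (∀ i, m' i < 2 ^ (k+1)) ∧ (∀ i, m' i / 2 = m i) ∧ α < avgOn f (hcube (k+1) m')
  let Bad : ℕ → (Fin n → ℕ) → Prop := fun k m => ∃ m', child k m m'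
  let T := {p : ℕ × (Fin n → ℕ) // (∀ i, p.2 i < 2 ^ p.1) ∧ Bad p.1 p.2 ∧
    ∀ l < p.1, ¬ Bad l (fun i => p.2 i / 2 ^ (p.1 - l))}
  choose q hq using fun p : T => p.2.2.1
  let P : T → Set (Fin n → ℝ) := fun p => hcube p.1.1 p.1.2
  let C : T → Set (Fin n → ℝ) := fun p => hcube (p.1.1 + 1) (q p)
  have hCP : ∀ p, C p ⊆ P p := by
    intro p y hy
    have h1 := didx_of_mem hy
    have h2 := mem_hcube_didx p.1.1 (nonneg_of_mem_hcube hy)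
    have : didx p.1.1 y = p.1.2 := by
      funext i
      rw [← didx_div p.1.1 1 y i, h1, pow_one]
      exact (hq p).2.1 i
    rwa [this] at h2
  have hlt : ∀ p p' : T, ∀ y, y ∈ P p → y ∈ P p' → p.1.1 < p'.1.1 → False := by
    intro p p' y hy hy' hl
    apply p'.2.2.2 _ hl
    have : (fun i => p'.1.2 i / 2 ^ (p'.1.1 - p.1.1)) = p.1.2 := by
      funext i
      have h := didx_div p.1.1 (p'.1.1 - p.1.1) y i
      rw [Nat.add_sub_cancel' hl.le, didx_of_mem hy, didx_of_mem hy'] at h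
      exact h
    rw [this]
    exact p.2.2.1
  have hPd : Pairwise (Function.onFun Disjoint P) := by
    intro p p' hne
    rw [Function.onFun, Set.disjoint_left]
    intro y hy hy'
    rcases lt_trichotomy p.1.1 p'.1.1 with h | h | h
    · exact hlt p p' y hy hy' h
    · apply hne
      apply Subtype.ext
      refine Prod.ext h ?_
      rw [← didx_of_mem hy, ← didx_of_mem hy', h]
    · exact hlt p' p y hy' hy h
  have hCd : Pairwise (Function.onFun Disjoint C) := fun p p' hne =>
    (hPd hne).mono (hCP p) (hCP p')
  have hPm : ∀ p, MeasurableSet (P p) := fun p => hcube_meas _ _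
  have hCm : ∀ p, MeasurableSet (C p) := fun p => hcube_meas _ _
  have hPQ : ∀ p, P p ⊆ Q0 n := fun p => hcube_sub p.2.1
  have hUQ : (⋃ p, P p) ⊆ Q0 n := iUnion_subset hPQ
  have hEQ : (⋃ p, C p) ⊆ Q0 n := iUnion_subset fun p => (hCP p).trans (hPQ p)
  have hPos : IntegrableOn (fun x => max (f x - α) 0) (Q0 n) :=
    (hf.sub (integrableOn_const hQf)).pos_part
  -- parents have small average
  have h0 : ∀ m : Fin n → ℕ, (∀ i, m i < 2 ^ 0) → avgOn f (hcube 0 m) ≤ α := by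
    intro m hm
    have : (ccube 0 m : Set (Fin n → ℝ)) = Q0 n := by
      have hm0 : ∀ i, m i = 0 := fun i => by simpa using hm i
      simp only [ccube, Q0, hm0]
      congr 1 <;> funext i <;> simp
    rw [avgOn_congr f (hcube_ae 0 m), this]
    exact hα
  have hPa : ∀ p : T, avgOn f (P p) ≤ α := by
    rintro ⟨⟨k, m⟩, hm, hb, hl⟩
    rcases k with _ | k
    · exact h0 m hm
    · by_contra hcon
      apply hl k (Nat.lt_succ_self k)
      refine ⟨m, hm, ?_, not_le.1 hcon⟩
      intro i
      simp
  have hCa : ∀ p : T, 0 ≤ ∫ x in C p, (f x - α) := by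
    intro p
    have hfi := hf.mono_set ((hCP p).trans (hPQ p))
    have hv : 0 < (volume (C p)).toReal := by simp only [C, hcube_vol]; positivity
    have hvf : volume (C p) ≠ ⊤ := fun h => by simp [h] at hv
    rw [integral_sub hfi (integrableOn_const hvf)]
    have := (hq p).2.2
    change α < avgOn f (C p) at this
    rw [avgOn, lt_inv_mul_iff₀ hv] at this
    simp [measureReal_def]
    linarith
  refine ⟨⋃ p, C p, hEQ, MeasurableSet.iUnion hCm, ?_, ?_⟩
  · have := hasSum_integral_iUnion (μ := volume) (f := fun x => f x - α) hCm hCd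
      ((hf.sub (integrableOn_const hQf)).mono_set hEQ)
    exact this.nonneg hCa
  · have hoff : ∫ x in Q0 n, max (f x - α) 0 = ∫ x in ⋃ p, P p, max (f x - α) 0 := by
      have hX : (hcube 0 (fun _ => 0) : Set (Fin n → ℝ)) =ᵐ[volume] Q0 n := by
        have : (ccube 0 (fun _ => 0) : Set (Fin n → ℝ)) = Q0 n := by
          simp only [ccube, Q0]
          congr 1 <;> funext i <;> simp
        rw [← this]; exact hcube_ae _ _
      apply setIntegral_eq_of_subset_of_ae_sdiff_eq_zero hQ.nullMeasurableSet hUQ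
      filter_upwards [dyadic_diff f hf, hX.mem_iff] with x hx hx0 hxd
      have hxc := hx0.2 hxd.1
      have hn := nonneg_of_mem_hcube hxc
      have hl := lt_one_of_mem_hcube (fun i => by simp) hxc
      have hnb : ∀ k, ¬ Bad k (didx k x) := by
        intro k
        induction k using Nat.strong_induction_on with
        | _ k ih =>
          intro hb
          apply hxd.2
          refine mem_iUnion.2 ⟨⟨(k, didx k x), didx_lt k hl, hb, ?_⟩, mem_hcube_didx k hn⟩
          intro l hlk
          have : (fun i => didx k x i / 2 ^ (k - l)) = didx l x := by
            funext i
            have h := didx_div l (k - l) x i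
            rwa [Nat.add_sub_cancel' hlk.le] at h
          rw [this]
          exact ih l hlk
      have : f x ≤ α := by
        refine le_of_tendsto' ((Filter.tendsto_add_atTop_iff_nat 1).2 (hx hn hl)) fun k => ?_
        by_contra hcon
        refine hnb k ⟨didx (k+1) x, didx_lt _ hl, ?_, not_le.1 hcon⟩
        intro i
        simpa using didx_div k 1 x i
      exact max_eq_right (by linarith)
    rw [hoff]
    have s1 := hasSum_integral_iUnion (μ := volume) (f := fun x => max (f x - α) 0) hPm hPd
      (hPos.mono_set hUQ)
    have s2 := (hasSum_integral_iUnion (μ := volume) (f := fun _ => (1:ℝ)) hCm hCd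
      ((integrableOn_const hQf).mono_set hEQ)).mul_left (2 ^ n * M / 2)
    have := hasSum_le (fun p => ?_) s1 s2
    · simpa [measureReal_def] using this
    · refine (osc_bound f hf hM p.2.1 (hPa p)).trans (le_of_eq ?_)
      simp only [integral_const, smul_eq_mul, mul_one, measureReal_def,
        Measure.restrict_apply_univ, C, hcube_vol]
      rw [pow_succ, mul_inv, mul_pow]
      have : (2:ℝ) ^ n * (2⁻¹) ^ n = 1 := by rw [← mul_pow]; norm_num
      linear_combination (-(M / 2) * ((2:ℝ) ^ (p.1.1))⁻¹ ^ n) * this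

lemma core {n : ℕ} (f : (Fin n → ℝ) → ℝ) (hf : IntegrableOn f (Q0 n))
    {M : ℝ} (hM : ∀ Q, IsDyadic n Q → oscOn f Q ≤ M) {g : ℝ → ℝ}
    (hg : AntitoneOn g (Ioo 0 1))
    (hid : ProbabilityTheory.IdentDistrib f g (volume.restrict (Q0 n)) (volume.restrict (Ioo 0 1)))
    {a b α : ℝ} (ha : 0 ≤ a) (hab : a < b) (hb : b ≤ 1) (hz : ∫ t in a..b, (g t - α) = 0)
    (hα : avgOn f (Q0 n) ≤ α) : ∫ t in a..b, |g t - α| ≤ 2 ^ n * M * (b - a) := by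
  have hQ : MeasurableSet (Q0 n) := measurableSet_Icc
  have hQf : volume (Q0 n) ≠ ⊤ := isCompact_Icc.measure_lt_top.ne
  have hQ1 : (volume (Q0 n)).toReal = 1 := by
    rw [Q0, Real.volume_Icc_pi_toReal (fun i => by simp)]; simp
  have hM0 : 0 ≤ M := by
    refine le_trans ?_ (hM (ccube 0 (fun _ => 0)) ⟨0, _, fun i => by simp, rfl⟩)
    exact mul_nonneg (by positivity) (integral_nonneg fun x => abs_nonneg _)
  have hgi : IntegrableOn g (Ioo 0 1) := hid.integrable_iff.1 hf
  have hgc : ∀ c : ℝ, IntegrableOn (fun t => g t - c) (Ioo 0 1) := fun c =>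
    hgi.sub (integrableOn_const (by simp))
  have hfc : ∀ c : ℝ, IntegrableOn (fun t => f t - c) (Q0 n) := fun c =>
    hf.sub (integrableOn_const hQf)
  have hanti : AntitoneOn (fun t => g t - α) (Ioo 0 1) := fun x hx y hy hxy => by
    have := hg hx hy hxy
    dsimp only; linarith
  have toI : ∀ h : ℝ → ℝ, ∀ x y : ℝ, x ≤ y → ∫ t in x..y, h t = ∫ t in Ioo x y, h t := by
    intro h x y hxy
    rw [intervalIntegral.integral_of_le hxy, integral_Ioc_eq_integral_Ioo]
  have hpos : ∀ c : ℝ, ∫ x in Q0 n, max (f x - c) 0 = ∫ t in (0:ℝ)..1, max (g t - c) 0 := by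
    intro c
    rw [toI _ _ _ zero_le_one]
    exact (hid.comp (u := fun s : ℝ => max (s - c) 0) (by fun_prop)).integral_eq
  obtain ⟨E, hEQ, hEm, hE0, hE1⟩ := calderon_zygmund f hf hM hα
  set r := (volume E).toReal with hr
  have hEf : volume E ≠ ⊤ := measure_ne_top_of_subset hEQ hQf
  have hr0 : 0 ≤ r := ENNReal.toReal_nonneg
  have hr1 : r ≤ 1 := by
    rw [← hQ1]; exact ENNReal.toReal_mono hQf (measure_mono hEQ)
  have hEi := hf.mono_set hEQ
  have hEsub : ∀ c : ℝ, ∫ x in E, (f x - c) = (∫ x in E, f x) - c * r := by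
    intro c
    rw [integral_sub hEi (integrableOn_const hEf)]
    simp [measureReal_def, ← hr, mul_comm]
  have hIsub : ∀ c x y : ℝ, 0 ≤ x → x ≤ y → y ≤ 1 →
      ∫ t in x..y, (g t - c) = (∫ t in x..y, g t) - c * (y - x) := by
    intro c x y h1 h2 h3
    rw [intervalIntegral.integral_sub (ivl hgi h1 h2 h3) (by simp)]
    simp [mul_comm]
  have key : ∫ x in E, f x ≤ ∫ t in (0:ℝ)..r, g t := by
    rcases hr0.eq_or_lt with h0 | h0
    · have hE : volume E = 0 := by
        have := (ENNReal.toReal_eq_zero_iff _).1 h0.symm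
        tauto
      rw [← h0, Measure.restrict_eq_zero.2 hE]; simp
    rcases hr1.eq_or_lt with h1 | h1
    · have hae : E =ᵐ[volume] Q0 n := by
        apply ae_eq_of_subset_of_measure_ge hEQ _ hEm.nullMeasurableSet hQf
        rw [← ENNReal.toReal_le_toReal hQf hEf, hQ1, ← hr, h1]
      rw [setIntegral_congr_set hae, h1, toI _ _ _ zero_le_one]
      exact hid.integral_eq.le
    · have hrm : r ∈ Ioo (0:ℝ) 1 := ⟨h0, h1⟩
      have s1 : ∫ x in E, (f x - g r) ≤ ∫ x in Q0 n, max (f x - g r) 0 := by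
        refine le_trans (setIntegral_mono ((hfc _).mono_set hEQ) (IntegrableOn.mono_set (Integrable.pos_part (hfc _)) hEQ)
          (fun x => le_max_left _ _)) ?_
        exact setIntegral_mono_set (hfc _).pos_part
          (Filter.Eventually.of_forall fun x => le_max_right _ _) hEQ.eventuallyLE
      have s2 : ∫ t in (0:ℝ)..1, max (g t - g r) 0 = ∫ t in (0:ℝ)..r, (g t - g r) := by
        have hp : IntegrableOn (fun t => max (g t - g r) 0) (Ioo 0 1) := (hgc (g r)).pos_part
        rw [← intervalIntegral.integral_add_adjacent_intervals
          (ivl hp le_rfl h0.le h1.le) (ivl hp h0.le h1.le le_rfl)]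
        have e1 : ∫ t in (0:ℝ)..r, max (g t - g r) 0 = ∫ t in (0:ℝ)..r, (g t - g r) := by
          apply intervalIntegral.integral_congr_Ioo_of_le h0.le
          intro t ht
          have := hg ⟨ht.1, ht.2.trans h1⟩ hrm ht.2.le
          exact max_eq_left (by linarith)
        have e2 : ∫ t in r..1, max (g t - g r) 0 = ∫ t in r..1, (0:ℝ) := by
          apply intervalIntegral.integral_congr_Ioo_of_le h1.le
          intro t ht
          have := hg hrm ⟨h0.trans ht.1, ht.2⟩ ht.1.le
          exact max_eq_right (by linarith)
        rw [e1, e2]; simp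
      rw [hpos, s2, hEsub, hIsub _ _ _ le_rfl h0.le h1.le] at s1
      linarith
  have hrI : 0 ≤ ∫ t in (0:ℝ)..r, (g t - α) := by
    rw [hIsub _ _ _ le_rfl hr0 hr1]
    rw [hEsub] at hE0
    linarith
  rw [hpos] at hE1
  have fin := one_dim (hgc α) hanti ha hab hb hz hr0 hr1 hrI (by positivity) hE1
  have hai := ivl (hgc α) ha hab.le hb
  have hap := ivl (hgc α).pos_part ha hab.le hb
  have : ∫ t in a..b, |g t - α| = ∫ t in a..b, (2 * max (g t - α) 0 - (g t - α)) := by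
    congr 1; funext t
    rcases le_total 0 (g t - α) with h | h
    · rw [abs_of_nonneg h, max_eq_left h]; ring
    · rw [abs_of_nonpos h, max_eq_right h]; ring
  rw [this, intervalIntegral.integral_sub (hap.const_mul 2) hai, hz,
    intervalIntegral.integral_const_mul]
  linarith

lemma avgOn_neg {n : ℕ} (f : (Fin n → ℝ) → ℝ) (Q : Set (Fin n → ℝ)) :
    avgOn (fun x => - f x) Q = - avgOn f Q := by
  simp [avgOn, integral_neg]

lemma oscOn_neg {n : ℕ} (f : (Fin n → ℝ) → ℝ) (Q : Set (Fin n → ℝ)) :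
    oscOn (fun x => - f x) Q = oscOn f Q := by
  unfold oscOn
  rw [avgOn_neg]
  congr 2; funext x
  rw [← abs_neg]; congr 1; ring

lemma reflect_mp : MeasurePreserving (fun t : ℝ => 1 - t) (volume.restrict (Ioo 0 1))
    (volume.restrict (Ioo 0 1)) := by
  have := (volume.measurePreserving_sub_left (1:ℝ)).restrict_preimage
    (s := Ioo (0:ℝ) 1) measurableSet_Ioo
  have e : (fun t : ℝ => 1 - t) ⁻¹' Ioo 0 1 = Ioo 0 1 := by
    ext t; simp only [mem_preimage, mem_Ioo]; constructor <;> intro h <;> constructor <;> linarith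
  rwa [e] at this

lemma ident {n : ℕ} (f : (Fin n → ℝ) → ℝ) (hf : IntegrableOn f (Q0 n)) (g : ℝ → ℝ)
    (hg : IsRearrangement f g) :
    ProbabilityTheory.IdentDistrib f g (volume.restrict (Q0 n)) (volume.restrict (Ioo 0 1)) := by
  have hQ : MeasurableSet (Q0 n) := measurableSet_Icc
  have hQ1 : volume (Q0 n) = 1 := by
    rw [Q0, Real.volume_Icc_pi]; simp
  have hR : volume.restrict (Ioo (0:ℝ) 1) = volume.restrict (Ioc (0:ℝ) 1) :=
    Measure.restrict_congr_set Ioo_ae_eq_Ioc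
  rw [hR]
  have hfm : AEMeasurable f (volume.restrict (Q0 n)) := hf.aestronglyMeasurable.aemeasurable
  have hgm : AEMeasurable g (volume.restrict (Ioc (0:ℝ) 1)) :=
    aemeasurable_restrict_of_antitoneOn measurableSet_Ioc hg.1
  refine ⟨hfm, hgm, ?_⟩
  have : IsProbabilityMeasure (volume.restrict (Q0 n)) := ⟨by simp [hQ1]⟩
  have : IsProbabilityMeasure (volume.restrict (Ioc (0:ℝ) 1)) := ⟨by simp⟩
  have := Measure.isProbabilityMeasure_map hfm
  have := Measure.isProbabilityMeasure_map hgm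
  apply Measure.ext_of_Iic
  intro lam
  have key : Measure.map f (volume.restrict (Q0 n)) (Ioi lam) =
      Measure.map g (volume.restrict (Ioc (0:ℝ) 1)) (Ioi lam) := by
    rw [Measure.map_apply_of_aemeasurable hfm measurableSet_Ioi,
      Measure.map_apply_of_aemeasurable hgm measurableSet_Ioi, Measure.restrict_apply' hQ,
      Measure.restrict_apply' measurableSet_Ioc]
    have := (hg.2.2 lam).symm
    rw [inter_comm, inter_comm _ (Ioc (0:ℝ) 1)]
    exact this
  rw [← compl_Ioi, prob_compl_eq_one_sub measurableSet_Ioi, key,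
    prob_compl_eq_one_sub measurableSet_Ioi]

/-- **Theorem 1.** If `f ∈ BMO_𝒟([0,1]ⁿ)` with `‖f‖_{*,𝒟} ≤ M`, then its nonincreasing
rearrangement `f_d` lies in `BMO((0,1])` with `‖f_d‖_* ≤ 2ⁿ M`: for every subinterval
`J = (a,b] ⊆ (0,1]` of positive length, `(1/|J|) ∫_J |f_d - (f_d)_J| ≤ 2ⁿ M`. -/
theorem dyadic_bmo_rearrangement (n : ℕ) (hn : 1 ≤ n)
    (f : (Fin n → ℝ) → ℝ) (hf : IntegrableOn f (Q0 n))
    (M : ℝ) (hM : ∀ Q, IsDyadic n Q → oscOn f Q ≤ M)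
    (fd : ℝ → ℝ) (hfd : IsRearrangement f fd)
    (a b : ℝ) (ha : 0 ≤ a) (hab : a < b) (hb : b ≤ 1) :
    oscI fd (Set.Ioc a b) ≤ 2 ^ n * M := by
  have hid := ident f hf fd hfd
  have hanti : AntitoneOn fd (Ioo 0 1) := hfd.1.mono Ioo_subset_Ioc_self
  have hgi : IntegrableOn fd (Ioo 0 1) := hid.integrable_iff.1 hf
  have hba : 0 < b - a := by linarith
  have hv : (volume (Ioc a b)).toReal = b - a := by
    rw [Real.volume_Ioc, ENNReal.toReal_ofReal hba.le]
  set α := avgI fd (Ioc a b) with hα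
  have hz : ∫ t in a..b, (fd t - α) = 0 := by
    rw [intervalIntegral.integral_sub (ivl hgi ha hab.le hb) (by simp)]
    simp only [intervalIntegral.integral_const, smul_eq_mul]
    rw [hα, avgI, hv, intervalIntegral.integral_of_le hab.le]
    field_simp
    ring
  suffices H : ∫ t in a..b, |fd t - α| ≤ 2 ^ n * M * (b - a) by
    rw [oscI, hv, ← hα, ← intervalIntegral.integral_of_le hab.le, inv_mul_le_iff₀ hba]
    linarith
  rcases le_total (avgOn f (Q0 n)) α with h | h
  · exact core f hf hM hanti hid ha hab hb hz h
  · have hM' : ∀ Q, IsDyadic n Q → oscOn (fun x => - f x) Q ≤ M := fun Q hQ => by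
      rw [oscOn_neg]; exact hM Q hQ
    have hanti' : AntitoneOn (fun t => - fd (1 - t)) (Ioo 0 1) := by
      intro x hx y hy hxy
      have := hanti (a := 1 - y) (b := 1 - x) ⟨by linarith [hy.2], by linarith [hy.1]⟩
        ⟨by linarith [hx.2], by linarith [hx.1]⟩ (by linarith)
      dsimp only; linarith
    have hid2 : ProbabilityTheory.IdentDistrib fd (fun t => fd (1 - t))
        (volume.restrict (Ioo 0 1)) (volume.restrict (Ioo 0 1)) := by
      have hm := hid.aemeasurable_snd
      refine ⟨hm, hm.comp_quasiMeasurePreserving reflect_mp.quasiMeasurePreserving, ?_⟩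
      have hm' : AEMeasurable fd (Measure.map (fun t : ℝ => 1 - t) (volume.restrict (Ioo 0 1))) := by
        rw [reflect_mp.map_eq]; exact hm
      have := AEMeasurable.map_map_of_aemeasurable hm' reflect_mp.measurable.aemeasurable
      rw [reflect_mp.map_eq] at this
      exact this
    have hid' : ProbabilityTheory.IdentDistrib (fun x => - f x) (fun t => - fd (1 - t))
        (volume.restrict (Q0 n)) (volume.restrict (Ioo 0 1)) :=
      (hid.trans hid2).comp (u := fun s : ℝ => - s) measurable_neg
    have hz' : ∫ t in (1 - b)..(1 - a), (- fd (1 - t) - -α) = 0 := by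
      have := intervalIntegral.integral_comp_sub_left (a := 1 - b) (b := 1 - a)
        (fun t => - fd t - -α) 1
      rw [this]
      simp only [sub_sub_cancel]
      have e : (fun t => - fd t - -α) = fun t => - (fd t - α) := by funext t; ring
      rw [e, intervalIntegral.integral_neg, hz, neg_zero]
    have := core (fun x => - f x) hf.neg hM' hanti' hid' (a := 1 - b) (b := 1 - a) (α := -α)
      (by linarith) (by linarith) (by linarith) hz' (by rw [avgOn_neg]; linarith)
    rw [intervalIntegral.integral_comp_sub_left (fun t => |- fd t - -α|) 1] at this
    simp only [sub_sub_cancel] at this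
    have e : (fun t => |- fd t - -α|) = fun t => |fd t - α| := by
      funext t; rw [← abs_neg]; congr 1; ring
    rw [e] at this
    linarith
end
end

section
/- (Dyadic John–Nirenberg inequality.) Let f : Q0 = [0,1]^n → ℝ be integrable with 0 < ‖f‖_{*,D} < ∞. Then for every λ > 0, |{x ∈ Q0 : f(x) − f_{Q0} > λ}| ≤ e · exp(−λ / (2^{n−1} e ‖f‖_{*,D})). In other words, the John–Nirenberg bound B·exp(−bλ/‖f‖_{*,D}) holds with B = e (independent of n) and b = 1/(2^{n−1}e). -/
open MeasureTheory Set Real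

noncomputable section

open Filter Topology
/-- Dyadic cube of generation `k` and index `m`. -/
def jnC {n : ℕ} (k : ℕ) (m : Fin n → ℕ) : Set (Fin n → ℝ) :=
  Set.Icc (fun i => (m i : ℝ) / 2 ^ k) (fun i => ((m i : ℝ) + 1) / 2 ^ k)

/-- Index of a child. -/
def jnCh {n : ℕ} (m : Fin n → ℕ) (ε : Fin n → Fin 2) : Fin n → ℕ := fun i => 2 * m i + (ε i : ℕ)

/-- Volume of a cube. -/
def jnV (n k : ℕ) : ℝ := (((2:ℝ) ^ k)⁻¹) ^ n

lemma jnV_pos (n k : ℕ) : 0 < jnV n k := by unfold jnV; positivity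

lemma jnV_succ (n k : ℕ) : jnV n k = 2 ^ n * jnV n (k + 1) := by
  unfold jnV
  rw [← mul_pow]; congr 1; rw [pow_succ]; field_simp

lemma jnC_vol {n : ℕ} (k : ℕ) (m : Fin n → ℕ) : volume (jnC k m) = ENNReal.ofReal (jnV n k) := by
  unfold jnC jnV
  rw [Real.volume_Icc_pi, ENNReal.ofReal_pow (by positivity)]
  rw [Finset.prod_congr rfl (g := fun _ => ENNReal.ofReal (((2:ℝ)^k)⁻¹))]
  · simp
  · intro i _
    congr 1; field_simp; ring

lemma jnC_vol' {n : ℕ} (k : ℕ) (m : Fin n → ℕ) : (volume (jnC k m)).toReal = jnV n k := by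
  rw [jnC_vol, ENNReal.toReal_ofReal (jnV_pos n k).le]

lemma jnCh_lt {n : ℕ} {k : ℕ} {m : Fin n → ℕ} (hm : ∀ i, m i < 2 ^ k) (ε : Fin n → Fin 2) :
    ∀ i, jnCh m ε i < 2 ^ (k + 1) := by
  intro i
  have := hm i; have := (ε i).2
  simp only [jnCh]; rw [pow_succ]; omega

lemma jnCh_sub {n : ℕ} (k : ℕ) (m : Fin n → ℕ) (ε : Fin n → Fin 2) :
    jnC (k + 1) (jnCh m ε) ⊆ jnC k m := by
  apply Set.Icc_subset_Icc
  · intro i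
    have h : (0:ℝ) ≤ ((ε i : ℕ) : ℝ) := by positivity
    simp only [jnCh]; push_cast
    rw [div_le_div_iff₀ (by positivity) (by positivity), pow_succ]
    have : (0:ℝ) < 2 ^ k := by positivity
    nlinarith
  · intro i
    have h : ((ε i : ℕ) : ℝ) ≤ 1 := by exact_mod_cast Nat.lt_succ_iff.1 (ε i).2
    simp only [jnCh]; push_cast
    rw [div_le_div_iff₀ (by positivity) (by positivity), pow_succ]
    have : (0:ℝ) < 2 ^ k := by positivity
    nlinarith

lemma jnC_iUnion {n : ℕ} (k : ℕ) (m : Fin n → ℕ) :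
    (⋃ ε : Fin n → Fin 2, jnC (k + 1) (jnCh m ε)) = jnC k m := by
  apply Set.Subset.antisymm (Set.iUnion_subset fun ε => jnCh_sub k m ε)
  intro x hx
  rw [Set.mem_iUnion]
  have h2 : (0:ℝ) < 2 ^ k := by positivity
  have key : ∀ i, ∃ e : Fin 2, ((2 * m i + (e:ℕ) : ℕ) : ℝ) / 2 ^ (k+1) ≤ x i ∧
      x i ≤ (((2 * m i + (e:ℕ) : ℕ) : ℝ) + 1) / 2 ^ (k+1) := by
    intro i
    have h0 := hx.1 i
    have h1 := hx.2 i
    simp only at h0 h1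
    rw [div_le_iff₀ h2] at h0
    rw [le_div_iff₀ h2] at h1
    rcases le_total (x i * 2 ^ k) (m i + 1/2) with h | h
    · refine ⟨0, ?_, ?_⟩
      · rw [div_le_iff₀ (by positivity), pow_succ]; push_cast; simp; nlinarith
      · rw [le_div_iff₀ (by positivity), pow_succ]; push_cast; simp; nlinarith
    · refine ⟨1, ?_, ?_⟩
      · rw [div_le_iff₀ (by positivity), pow_succ]; push_cast; simp; nlinarith
      · rw [le_div_iff₀ (by positivity), pow_succ]; push_cast; simp; nlinarith
  choose e he using key
  exact ⟨e, fun i => (he i).1, fun i => (he i).2⟩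

lemma jnC_disj {n : ℕ} (k : ℕ) (m : Fin n → ℕ) :
    Pairwise (Function.onFun (AEDisjoint volume) fun ε : Fin n → Fin 2 => jnC (k + 1) (jnCh m ε)) := by
  intro ε ε' hne
  obtain ⟨i, hi⟩ := Function.ne_iff.1 hne
  unfold Function.onFun AEDisjoint jnC
  rw [Set.Icc_inter_Icc, Real.volume_Icc_pi]
  apply Finset.prod_eq_zero (Finset.mem_univ i)
  rw [ENNReal.ofReal_eq_zero]
  simp only [Pi.sup_apply, Pi.inf_apply, jnCh]
  have h2 : (0:ℝ) < 2 ^ (k+1) := by positivity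
  rw [sub_nonpos]
  rcases lt_or_gt_of_ne hi with h | h
  · refine (inf_le_left).trans (le_trans ?_ le_sup_right)
    have : ((ε i : ℕ) : ℝ) + 1 ≤ ((ε' i : ℕ) : ℝ) := by exact_mod_cast h
    gcongr; push_cast; linarith
  · refine (inf_le_right).trans (le_trans ?_ le_sup_left)
    have : ((ε' i : ℕ) : ℝ) + 1 ≤ ((ε i : ℕ) : ℝ) := by exact_mod_cast h
    gcongr; push_cast; linarith

lemma jnC_meas {n : ℕ} (k : ℕ) (m : Fin n → ℕ) : MeasurableSet (jnC k m) := measurableSet_Icc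

lemma jnC_integral {n : ℕ} (k : ℕ) (m : Fin n → ℕ) (g : (Fin n → ℝ) → ℝ)
    (hg : IntegrableOn g (jnC k m)) :
    ∫ x in jnC k m, g x = ∑ ε : Fin n → Fin 2, ∫ x in jnC (k + 1) (jnCh m ε), g x := by
  rw [← jnC_iUnion k m, integral_iUnion_ae (fun ε => (jnC_meas _ _).nullMeasurableSet)
    (jnC_disj k m) (by rwa [jnC_iUnion]), tsum_fintype]

lemma jnC_sub {n : ℕ} {k : ℕ} {m : Fin n → ℕ} (hm : ∀ i, m i < 2 ^ k) : jnC k m ⊆ Q0 n := by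
  apply Set.Icc_subset_Icc
  · intro i; simp only [Pi.zero_apply]; positivity
  · intro i
    simp only [Pi.one_apply]
    rw [div_le_one (by positivity)]
    exact_mod_cast hm i

lemma jnC_zero {n : ℕ} : jnC 0 (0 : Fin n → ℕ) = Q0 n := by
  unfold jnC Q0
  congr 1 <;> ext i <;> simp

lemma jnC_ball {n : ℕ} (k : ℕ) (m : Fin n → ℕ) :
    jnC k m = Metric.closedBall (fun i => ((m i : ℝ) + 1 / 2) / 2 ^ k) (1 / 2 ^ (k + 1)) := by
  rw [closedBall_pi _ (by positivity)]
  simp only [Real.closedBall_eq_Icc, Set.pi_univ_Icc]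
  unfold jnC
  congr 1 <;> ext i <;> rw [pow_succ] <;> field_simp <;> ring

section
variable {n : ℕ} (f : (Fin n → ℝ) → ℝ)

/-- Size of the depth-`N` stopping set inside a cube. -/
def jnA (t : ℝ) : ℕ → ℕ → (Fin n → ℕ) → ℝ
  | 0, k, m => open Classical in if t < avgOn f (jnC k m) then jnV n k else 0
  | N + 1, k, m => open Classical in if t < avgOn f (jnC k m) then jnV n k else
      ∑ ε : Fin n → Fin 2, jnA t N (k + 1) (jnCh m ε)

/-- The depth-`N` stopping set inside a cube. -/
def jnB (t : ℝ) : ℕ → ℕ → (Fin n → ℕ) → Set (Fin n → ℝ)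
  | 0, k, m => open Classical in if t < avgOn f (jnC k m) then jnC k m else ∅
  | N + 1, k, m => open Classical in if t < avgOn f (jnC k m) then jnC k m else
      ⋃ ε : Fin n → Fin 2, jnB t N (k + 1) (jnCh m ε)

lemma jnA_nonneg (t : ℝ) (N : ℕ) : ∀ k m, 0 ≤ jnA f t N k m := by
  induction N with
  | zero => intro k m; unfold jnA; split_ifs; exacts [(jnV_pos n k).le, le_rfl]
  | succ N ih =>
    intro k m; unfold jnA; split_ifs
    exacts [(jnV_pos n k).le, Finset.sum_nonneg fun ε _ => ih _ _]

lemma jnA_le (t : ℝ) (N : ℕ) : ∀ k m, jnA f t N k m ≤ jnV n k := by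
  induction N with
  | zero => intro k m; unfold jnA; split_ifs; exacts [le_rfl, (jnV_pos n k).le]
  | succ N ih =>
    intro k m; unfold jnA; split_ifs
    · exact le_rfl
    · refine (Finset.sum_le_sum fun ε _ => ih _ _).trans ?_
      simp [jnV_succ n k]

lemma jnB_vol (t : ℝ) (N : ℕ) : ∀ k m, volume (jnB f t N k m) ≤ ENNReal.ofReal (jnA f t N k m) := by
  induction N with
  | zero => intro k m; unfold jnA jnB; split_ifs <;> simp [jnC_vol]
  | succ N ih =>
    intro k m; unfold jnA jnB; split_ifs
    · simp [jnC_vol]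
    · rw [ENNReal.ofReal_sum_of_nonneg fun ε _ => jnA_nonneg f t N _ _]
      refine (measure_iUnion_le _).trans ?_
      rw [tsum_fintype]
      exact Finset.sum_le_sum fun ε _ => ih _ _

lemma jnB_mono (t : ℝ) (N : ℕ) : ∀ k m, jnB f t N k m ⊆ jnB f t (N + 1) k m := by
  induction N with
  | zero => intro k m; unfold jnB; split_ifs <;> simp
  | succ N ih =>
    intro k m
    rw [jnB, jnB]; split_ifs
    · exact le_rfl
    · exact Set.iUnion_mono fun ε => ih _ _

lemma jnB_escape (t : ℝ) (x : Fin n → ℝ) (hx : x ∈ Q0 n) (h : ∀ N, x ∉ jnB f t N 0 0) (k : ℕ) :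
    ∃ m : Fin n → ℕ, (∀ i, m i < 2 ^ k) ∧ x ∈ jnC k m ∧ ∀ N, x ∉ jnB f t N k m := by
  induction k with
  | zero => exact ⟨0, by simp, by rwa [jnC_zero], h⟩
  | succ k ih =>
    obtain ⟨m, hm, hxm, hN⟩ := ih
    have hx' := hxm
    rw [← jnC_iUnion, Set.mem_iUnion] at hx'
    obtain ⟨ε, hε⟩ := hx'
    refine ⟨jnCh m ε, jnCh_lt hm ε, hε, fun N hc => hN (N + 1) ?_⟩
    rw [jnB]; split_ifs
    · exact hxm
    · exact Set.mem_iUnion.2 ⟨ε, hc⟩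

lemma jnB_avg (t : ℝ) (x : Fin n → ℝ) (k : ℕ) (m : Fin n → ℕ) (hx : x ∈ jnC k m)
    (h : ∀ N, x ∉ jnB f t N k m) : avgOn f (jnC k m) ≤ t := by
  by_contra hc
  have := h 0
  rw [jnB, if_pos (not_le.1 hc)] at this
  exact this hx

variable (hf : IntegrableOn f (Q0 n))
include hf

lemma jn_int {k : ℕ} {m : Fin n → ℕ} (hm : ∀ i, m i < 2 ^ k) : IntegrableOn f (jnC k m) :=
  hf.mono_set (jnC_sub hm)

lemma jn_fin (k : ℕ) (m : Fin n → ℕ) (a : ℝ) : IntegrableOn (fun _ => a) (jnC k m) := by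
  apply integrableOn_const
  · rw [jnC_vol]; exact ENNReal.ofReal_ne_top
  · exact enorm_ne_top

lemma jn_int_sub {k : ℕ} {m : Fin n → ℕ} (hm : ∀ i, m i < 2 ^ k) (a : ℝ) :
    IntegrableOn (fun x => f x - a) (jnC k m) :=
  (jn_int f hf hm).sub (jn_fin f hf k m a)

lemma jn_int_max {k : ℕ} {m : Fin n → ℕ} (hm : ∀ i, m i < 2 ^ k) (a : ℝ) :
    IntegrableOn (fun x => max (f x - a) 0) (jnC k m) :=
  (jn_int_sub f hf hm a).pos_part

lemma jn_avg {k : ℕ} {m : Fin n → ℕ} (hm : ∀ i, m i < 2 ^ k) (a : ℝ) :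
    ∫ x in jnC k m, (f x - a) = jnV n k * (avgOn f (jnC k m) - a) := by
  have hv := jnV_pos n k
  rw [integral_sub (jn_int f hf hm) (jn_fin f hf k m a)]
  unfold avgOn
  rw [jnC_vol', setIntegral_const, measureReal_def, jnC_vol']
  field_simp
  simp

lemma jn_avg_max {k : ℕ} {m : Fin n → ℕ} (hm : ∀ i, m i < 2 ^ k) (a : ℝ) :
    jnV n k * (avgOn f (jnC k m) - a) ≤ ∫ x in jnC k m, max (f x - a) 0 := by
  rw [← jn_avg f hf hm]
  exact setIntegral_mono (jn_int_sub f hf hm a) (jn_int_max f hf hm a) fun x => le_max_left _ _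

lemma jn_weak (t a : ℝ) (N : ℕ) : ∀ (k : ℕ) (m : Fin n → ℕ), (∀ i, m i < 2 ^ k) → a ≤ t →
    jnA f t N k m * (t - a) ≤ ∫ x in jnC k m, max (f x - a) 0 := by
  have base : ∀ (k : ℕ) (m : Fin n → ℕ), (∀ i, m i < 2 ^ k) → t < avgOn f (jnC k m) →
      jnV n k * (t - a) ≤ ∫ x in jnC k m, max (f x - a) 0 := by
    intro k m hm h
    refine le_trans ?_ (jn_avg_max f hf hm a)
    have := jnV_pos n k
    gcongr
  induction N with
  | zero =>
    intro k m hm hat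
    unfold jnA; split_ifs with h
    · exact base k m hm h
    · rw [zero_mul]; exact integral_nonneg fun x => le_max_right _ _
  | succ N ih =>
    intro k m hm hat
    unfold jnA; split_ifs with h
    · exact base k m hm h
    · rw [jnC_integral k m _ (jn_int_max f hf hm a), Finset.sum_mul]
      exact Finset.sum_le_sum fun ε _ => ih _ _ (jnCh_lt hm ε) hat

variable (M : ℝ) (hMpos : 0 < M) (hM : ∀ Q, IsDyadic n Q → oscOn f Q ≤ M)
include hMpos hM

lemma jn_half {k : ℕ} {m : Fin n → ℕ} (hm : ∀ i, m i < 2 ^ k) :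
    ∫ x in jnC k m, max (f x - avgOn f (jnC k m)) 0 ≤ jnV n k * M / 2 := by
  have hv := jnV_pos n k
  have h := hM (jnC k m) ⟨k, m, hm, rfl⟩
  unfold oscOn at h
  rw [jnC_vol', inv_mul_le_iff₀ hv] at h
  set a := avgOn f (jnC k m) with ha
  have h0 := jn_avg f hf hm a
  rw [← ha, sub_self, mul_zero] at h0
  have hs := jn_int_sub f hf hm a
  have e : ∀ x, max (f x - a) 0 = (1/2) * (|f x - a| + (f x - a)) := by
    intro x
    rcases le_total (f x - a) 0 with h | h
    · rw [max_eq_right h, abs_of_nonpos h]; ring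
    · rw [max_eq_left h, abs_of_nonneg h]; ring
  simp only [e]
  rw [integral_const_mul, integral_add hs.abs hs, h0]
  linarith

lemma jn_child (hn : 1 ≤ n) {k : ℕ} {m : Fin n → ℕ} (hm : ∀ i, m i < 2 ^ k) (ε : Fin n → Fin 2) :
    avgOn f (jnC (k + 1) (jnCh m ε)) ≤ avgOn f (jnC k m) + 2 ^ (n - 1) * M := by
  have h1 := jn_avg_max f hf (jnCh_lt hm ε) (avgOn f (jnC k m))
  have h2 : ∫ x in jnC (k + 1) (jnCh m ε), max (f x - avgOn f (jnC k m)) 0 ≤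
      ∫ x in jnC k m, max (f x - avgOn f (jnC k m)) 0 :=
    setIntegral_mono_set (jn_int_max f hf hm _) (ae_of_all _ fun x => le_max_right _ _)
      (jnCh_sub k m ε).eventuallyLE
  have h3 := jn_half f hf M hMpos hM hm
  have hv := jnV_pos n (k + 1)
  rw [jnV_succ] at h3
  have h4 : (2:ℝ) ^ n = 2 * 2 ^ (n - 1) := by rw [← pow_succ']; congr 1; omega
  rw [h4] at h3
  have h5 : jnV n (k+1) * (avgOn f (jnC (k + 1) (jnCh m ε)) - avgOn f (jnC k m)) ≤
    jnV n (k+1) * (2 ^ (n - 1) * M) := by linarith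
  have := le_of_mul_le_mul_left h5 hv
  linarith

lemma jn_step (hn : 1 ≤ n) (t : ℝ) (N : ℕ) : ∀ (k : ℕ) (m : Fin n → ℕ), (∀ i, m i < 2 ^ k) →
    avgOn f (jnC k m) ≤ t + 2 ^ (n - 1) * M →
    jnA f (t + 2 ^ (n - 1) * Real.exp 1 * M) N k m ≤ Real.exp (-1) * jnA f t N k m := by
  have he : 2 ≤ Real.exp 1 := by have := Real.add_one_le_exp 1; linarith
  have hc : M ≤ 2 ^ (n - 1) * M := le_mul_of_one_le_left hMpos.le (one_le_pow₀ (by norm_num))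
  set c := 2 ^ (n - 1) * M with hcdef
  have hs : 2 ^ (n - 1) * Real.exp 1 * M = Real.exp 1 * c := by rw [hcdef]; ring
  rw [hs]
  have hcpos : 0 < c := by linarith
  have hts : t < t + Real.exp 1 * c := by
    have := mul_pos (Real.exp_pos 1) hcpos; linarith
  have base : ∀ (N k : ℕ) (m : Fin n → ℕ), (∀ i, m i < 2 ^ k) → avgOn f (jnC k m) ≤ t + c →
      jnA f (t + Real.exp 1 * c) N k m ≤ Real.exp (-1) * jnV n k := by
    intro N k m hm h
    have hv := jnV_pos n k
    have hle : avgOn f (jnC k m) ≤ t + Real.exp 1 * c := by nlinarith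
    have h1 := (jn_weak f hf (t + Real.exp 1 * c) _ N k m hm hle).trans
      (jn_half f hf M hMpos hM hm)
    have hA := jnA_nonneg f (t + Real.exp 1 * c) N k m
    set A := jnA f (t + Real.exp 1 * c) N k m
    have h2 : A * (Real.exp 1 / 2 * c) ≤ A * (t + Real.exp 1 * c - avgOn f (jnC k m)) := by
      gcongr; nlinarith
    have h3 : jnV n k * M / 2 ≤ jnV n k * c / 2 := by gcongr
    have h4 : (c / 2) * (Real.exp 1 * A) ≤ (c / 2) * jnV n k := by linarith
    have h5 := le_of_mul_le_mul_left h4 (by positivity)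
    rw [Real.exp_neg, le_inv_mul_iff₀ (Real.exp_pos 1)]
    exact h5
  induction N with
  | zero =>
    intro k m hm h
    by_cases ht : t < avgOn f (jnC k m)
    · rw [jnA.eq_1 f t, if_pos ht]; exact base 0 k m hm h
    · rw [jnA, jnA, if_neg ht, if_neg (by linarith)]; simp
  | succ N ih =>
    intro k m hm h
    by_cases ht : t < avgOn f (jnC k m)
    · rw [jnA.eq_2 f t, if_pos ht]; exact base (N + 1) k m hm h
    · rw [jnA, jnA, if_neg ht, if_neg (by linarith), Finset.mul_sum]
      refine Finset.sum_le_sum fun ε _ => ih _ _ (jnCh_lt hm ε) ?_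
      have := jn_child f hf M hMpos hM hn hm ε
      linarith

lemma jn_iter (hn : 1 ≤ n) (N j : ℕ) :
    jnA f (avgOn f (Q0 n) + j * (2 ^ (n - 1) * Real.exp 1 * M)) N 0 0 ≤ Real.exp (-j) := by
  induction j with
  | zero => refine (jnA_le f _ N 0 0).trans ?_; simp [jnV]
  | succ j ih =>
    have h := jn_step f hf M hMpos hM hn
      (avgOn f (Q0 n) + j * (2 ^ (n - 1) * Real.exp 1 * M)) N 0 0 (by simp) (by
        rw [jnC_zero]
        have : 0 ≤ j * (2 ^ (n - 1) * Real.exp 1 * M) := by positivity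
        have : 0 ≤ 2 ^ (n - 1) * M := by positivity
        linarith)
    push_cast
    rw [add_mul, one_mul, ← add_assoc, neg_add, add_comm (-(j:ℝ)), Real.exp_add]
    exact h.trans (by gcongr)

omit hMpos hM in
lemma jn_diff (t : ℝ) : ∀ᵐ x, x ∈ Q0 n → (∀ N, x ∉ jnB f t N 0 0) → f x ≤ t := by
  have hg : Integrable ((Q0 n).indicator f) :=
    (integrable_indicator_iff measurableSet_Icc).2 hf
  have := IsUnifLocDoublingMeasure.ae_tendsto_average volume hg.locallyIntegrable 1
  filter_upwards [this] with x hx hxQ hN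
  choose m hm hxm hmN using jnB_escape f t x hxQ hN
  have hδ : Tendsto (fun k : ℕ => (1:ℝ) / 2 ^ (k + 1)) atTop (𝓝[>] 0) := by
    rw [tendsto_nhdsWithin_iff]
    refine ⟨?_, Eventually.of_forall fun k => by simp only [Set.mem_Ioi]; positivity⟩
    have h := (tendsto_pow_atTop_nhds_zero_of_lt_one (r := (1/2:ℝ)) (by norm_num)
      (by norm_num)).comp (tendsto_add_atTop_nat 1)
    refine h.congr fun k => ?_
    simp
  have h := hx (l := atTop) (fun k i => ((m k i : ℝ) + 1 / 2) / 2 ^ k) _ hδ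
    (Eventually.of_forall fun k => by rw [one_mul, ← jnC_ball]; exact hxm k)
  rw [Set.indicator_of_mem hxQ] at h
  refine le_of_tendsto h (Eventually.of_forall fun k => ?_)
  rw [← jnC_ball]
  refine le_trans (le_of_eq ?_) (jnB_avg f t x k (m k) (hxm k) (hmN k))
  rw [setAverage_eq, measureReal_def, smul_eq_mul, avgOn]
  congr 1
  exact setIntegral_congr_fun (jnC_meas _ _) fun y hy =>
    Set.indicator_of_mem (jnC_sub (hm k) hy) f

lemma jn_level (hn : 1 ≤ n) (j : ℕ) :
    volume {x ∈ Q0 n | avgOn f (Q0 n) + j * (2 ^ (n - 1) * Real.exp 1 * M) < f x} ≤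
      ENNReal.ofReal (Real.exp (-j)) := by
  set t := avgOn f (Q0 n) + j * (2 ^ (n - 1) * Real.exp 1 * M) with ht
  calc volume {x ∈ Q0 n | t < f x} ≤ volume (⋃ N, jnB f t N 0 0) := by
        apply measure_mono_ae
        filter_upwards [jn_diff f hf t] with x hx hmem
        by_contra hc
        have hc' : ∀ N, x ∉ jnB f t N 0 0 := fun N hN => hc (Set.mem_iUnion.2 ⟨N, hN⟩)
        exact absurd (hx hmem.1 hc') (not_le.2 hmem.2)
    _ = ⨆ N, volume (jnB f t N 0 0) :=
        (monotone_nat_of_le_succ fun N => jnB_mono f t N 0 0).measure_iUnion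
    _ ≤ _ := iSup_le fun N => (jnB_vol f t N 0 0).trans
        (ENNReal.ofReal_le_ofReal (jn_iter f hf M hMpos hM hn N j))
end

/-- **Theorem 2 (dyadic John–Nirenberg inequality).** If `f ∈ BMO_𝒟([0,1]ⁿ)` with
`0 < M` and `Ω(f,Q) ≤ M` for all dyadic `Q`, then for every `λ > 0`,
`|{x ∈ Q₀ : f(x) − f_{Q₀} > λ}| ≤ e · exp(−λ/(2ⁿ⁻¹ e M))`. -/
theorem dyadic_john_nirenberg (n : ℕ) (hn : 1 ≤ n)
    (f : (Fin n → ℝ) → ℝ) (hf : IntegrableOn f (Q0 n))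
    (M : ℝ) (hMpos : 0 < M) (hM : ∀ Q, IsDyadic n Q → oscOn f Q ≤ M)
    (lam : ℝ) (hlam : 0 < lam) :
    (volume {x ∈ Q0 n | lam < f x - avgOn f (Q0 n)}).toReal ≤
      Real.exp 1 * Real.exp (-(lam / (2 ^ (n - 1) * Real.exp 1 * M))) := by
  set s := 2 ^ (n - 1) * Real.exp 1 * M with hs
  have hspos : 0 < s := by positivity
  have hj := Nat.floor_le (div_nonneg hlam.le hspos.le)
  have hj' := Nat.lt_floor_add_one (lam / s)
  set j := ⌊lam / s⌋₊
  have h := jn_level f hf M hMpos hM hn j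
  rw [← Real.exp_add]
  refine (ENNReal.toReal_le_of_le_ofReal (Real.exp_pos (-(j:ℝ))).le
    ((measure_mono ?_).trans h)).trans (Real.exp_le_exp.2 (by linarith))
  rintro x ⟨hx, hx'⟩
  refine ⟨hx, ?_⟩
  rw [le_div_iff₀ hspos] at hj
  linarith
end
end

section
/- Let f : Q0 = [0,1]^n → [0,∞) be integrable. Then for every t ∈ (0,1], (1/t)∫_0^t |f^*(u) − f^{**}(t)| du ≤ 2^n · v(f; σ_t) · f^{**}(t), where σ_t = min(2 t^{1/n}, 1). -/
open MeasureTheory Set Real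

noncomputable section

namespace GRaux

variable {n : ℕ}

def key (k : ℕ) (x : Fin n → ℝ) : Fin n → ℤ := fun i => ⌊(2:ℝ) ^ k * x i⌋

def cell (k : ℕ) (x : Fin n → ℝ) : Set (Fin n → ℝ) := {y | key k y = key k x}

def ccube (k : ℕ) (x : Fin n → ℝ) : Set (Fin n → ℝ) :=
  Set.Icc (fun i => (key k x i : ℝ) / 2 ^ k) (fun i => ((key k x i : ℝ) + 1) / 2 ^ k)

def U (n : ℕ) : Set (Fin n → ℝ) := Set.pi univ fun _ => Ico (0:ℝ) 1

lemma key_step (k : ℕ) (x : Fin n → ℝ) (i : Fin n) : key k x i = key (k+1) x i / 2 := by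
  unfold key
  rw [← Int.natCast_mul_floor_div_cancel (n := 2) (by norm_num) ((2:ℝ)^k * x i)]
  congr 2
  push_cast
  ring

lemma key_mono {j k : ℕ} (h : j ≤ k) {x y : Fin n → ℝ} (e : key k x = key k y) :
    key j x = key j y := by
  induction k, h using Nat.le_induction with
  | base => exact e
  | succ k hk ih =>
    apply ih
    funext i
    rw [key_step k x, key_step k y, e]

lemma cell_eq (k : ℕ) (x : Fin n → ℝ) : cell k x =
    Set.pi univ fun i => Ico ((key k x i : ℝ) / 2 ^ k) (((key k x i : ℝ) + 1) / 2 ^ k) := by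
  ext y
  simp only [cell, mem_ofPred_eq, Set.mem_pi, mem_univ, forall_const, mem_Ico]
  rw [funext_iff]
  refine forall_congr' fun i => ?_
  have h2 : (0:ℝ) < 2 ^ k := by positivity
  rw [div_le_iff₀ h2, lt_div_iff₀ h2, mul_comm (y i)]
  generalize key k x = m
  unfold key
  rw [Int.floor_eq_iff]

lemma cell_ae (k : ℕ) (x : Fin n → ℝ) : cell k x =ᵐ[volume] ccube k x := by
  rw [cell_eq]
  exact Measure.univ_pi_Ico_ae_eq_Icc

lemma cell_meas (k : ℕ) (x : Fin n → ℝ) : MeasurableSet (cell k x) := by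
  rw [cell_eq]
  exact MeasurableSet.univ_pi fun i => measurableSet_Ico

lemma ccube_vol (k : ℕ) (x : Fin n → ℝ) : volume.real (ccube k x) = ((2:ℝ) ^ k)⁻¹ ^ n := by
  unfold ccube
  rw [Measure.real, Real.volume_Icc_pi_toReal]
  · have : ∀ i, ((key k x i : ℝ) + 1) / 2 ^ k - (key k x i : ℝ) / 2 ^ k = ((2:ℝ)^k)⁻¹ := by
      intro i; ring
    simp [this]
  · intro i
    simp only
    gcongr
    linarith

lemma cell_vol (k : ℕ) (x : Fin n → ℝ) : volume.real (cell k x) = ((2:ℝ) ^ k)⁻¹ ^ n := by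
  rw [← ccube_vol k x, Measure.real, Measure.real, measure_congr (cell_ae k x)]

lemma mem_cell (k : ℕ) (x : Fin n → ℝ) : x ∈ cell k x := rfl

lemma cell_zero {x : Fin n → ℝ} (hx : x ∈ U n) : cell 0 x = U n := by
  have : key 0 x = 0 := by
    funext i
    have := hx i (mem_univ i)
    simp only [key, pow_zero, one_mul, Pi.zero_apply]
    exact Int.floor_eq_zero_iff.2 this
  rw [cell_eq, this]
  simp [U]

lemma cell_sub {k : ℕ} {x : Fin n → ℝ} (hx : x ∈ U n) : cell k x ⊆ U n := by
  rw [← cell_zero hx]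
  intro y hy
  exact key_mono (Nat.zero_le k) hy

lemma U_sub : U n ⊆ Q0 n := by
  intro x hx
  exact ⟨fun i => (hx i (mem_univ i)).1, fun i => (hx i (mem_univ i)).2.le⟩

lemma U_ae : U n =ᵐ[volume] Q0 n := by
  exact Measure.univ_pi_Ico_ae_eq_Icc

lemma key_bd {k : ℕ} {x : Fin n → ℝ} (hx : x ∈ U n) (i : Fin n) :
    0 ≤ key k x i ∧ key k x i < 2 ^ k := by
  have h := hx i (mem_univ i)
  have h2 : (0:ℝ) < 2 ^ k := by positivity
  constructor
  · exact Int.floor_nonneg.2 (mul_nonneg h2.le h.1)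
  · apply Int.floor_lt.2
    push_cast
    nlinarith [h.2]

lemma ccube_dy {k : ℕ} {x : Fin n → ℝ} (hx : x ∈ U n) : IsDyadicSide n k (ccube k x) := by
  refine ⟨fun i => (key k x i).toNat, fun i => ?_, ?_⟩
  · have := key_bd (k := k) hx i
    zify
    rw [Int.toNat_of_nonneg this.1]
    exact this.2
  · unfold ccube
    have : ∀ i, (((key k x i).toNat : ℕ) : ℝ) = (key k x i : ℝ) := by
      intro i
      have := Int.toNat_of_nonneg (key_bd (k := k) hx i).1
      exact_mod_cast congrArg (Int.cast : ℤ → ℝ) this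
    simp only [this]

lemma ccube_ball (k : ℕ) (x : Fin n → ℝ) : ccube k x =
    Metric.closedBall (fun i => ((key k x i : ℝ) + 1/2) / 2 ^ k) (((2:ℝ) ^ k)⁻¹ / 2) := by
  rw [closedBall_pi _ (by positivity), ccube, ← pi_univ_Icc]
  congr 1
  funext i
  rw [Real.closedBall_eq_Icc]
  congr 1 <;> ring

lemma leb {g : (Fin n → ℝ) → ℝ} (hg : LocallyIntegrable g volume) :
    ∀ᵐ x : Fin n → ℝ, Filter.Tendsto (fun k : ℕ => ⨍ y in ccube k x, g y) Filter.atTop (nhds (g x)) := by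
  filter_upwards [IsUnifLocDoublingMeasure.ae_tendsto_average (μ := volume) hg 1] with x hx
  simp only [ccube_ball]
  refine hx _ _ ?_ ?_
  · rw [tendsto_nhdsWithin_iff]
    refine ⟨?_, Filter.Eventually.of_forall fun k => ?_⟩
    · have : Filter.Tendsto (fun k : ℕ => ((1/2:ℝ)^k) / 2) Filter.atTop (nhds (0/2)) :=
        (tendsto_pow_atTop_nhds_zero_of_lt_one (by norm_num) (by norm_num)).div_const 2
      simpa using this
    · simp only [mem_Ioi]; positivity
  · refine Filter.Eventually.of_forall fun k => ?_
    rw [one_mul, ← ccube_ball]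
    have h := mem_cell k x
    rw [cell_eq] at h
    exact ⟨fun i => (h i (mem_univ i)).1, fun i => (h i (mem_univ i)).2.le⟩

lemma Q0_vol : volume (Q0 n) = 1 := by
  unfold Q0
  rw [Real.volume_Icc_pi]
  simp

lemma ident {f : (Fin n → ℝ) → ℝ} (hf : IntegrableOn f (Q0 n)) {fstar : ℝ → ℝ}
    (hfs : IsRearrangement (fun x => |f x|) fstar) :
    ProbabilityTheory.IdentDistrib fstar (fun x => |f x|) (volume.restrict (Ioc (0:ℝ) 1))
      (volume.restrict (Q0 n)) := by
  have m1 : AEMeasurable fstar (volume.restrict (Ioc (0:ℝ) 1)) :=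
    aemeasurable_restrict_of_antitoneOn measurableSet_Ioc hfs.1
  have m2 : AEMeasurable (fun x => |f x|) (volume.restrict (Q0 n)) :=
    (Integrable.abs hf).aemeasurable
  refine ⟨m1, m2, ?_⟩
  have p1 : IsProbabilityMeasure (volume.restrict (Ioc (0:ℝ) 1)) := ⟨by simp⟩
  have p2 : IsProbabilityMeasure (volume.restrict (Q0 n)) := ⟨by simp [Q0_vol]⟩
  have q1 := Measure.isProbabilityMeasure_map m1
  have q2 := Measure.isProbabilityMeasure_map m2
  refine Measure.ext_of_Iic _ _ fun a => ?_
  rw [← compl_Ioi, prob_compl_eq_one_sub measurableSet_Ioi, prob_compl_eq_one_sub measurableSet_Ioi,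
    Measure.map_apply_of_aemeasurable m1 measurableSet_Ioi,
    Measure.map_apply_of_aemeasurable m2 measurableSet_Ioi,
    Measure.restrict_apply' measurableSet_Ioc,
    Measure.restrict_apply' (show MeasurableSet (Q0 n) from measurableSet_Icc)]
  have := hfs.2.2 a
  congr 1
  convert this using 2
  · ext x; simp [and_comm]
  · ext x; simp [and_comm, Q0]

lemma star_int {f : (Fin n → ℝ) → ℝ} (hf : IntegrableOn f (Q0 n)) {fstar : ℝ → ℝ}
    (hfs : IsRearrangement (fun x => |f x|) fstar) : IntegrableOn fstar (Ioc 0 1) :=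
  (ident hf hfs).integrable_iff.2 (Integrable.abs hf)

lemma star_eq {f : (Fin n → ℝ) → ℝ} (hf : IntegrableOn f (Q0 n)) (hpos : ∀ x ∈ Q0 n, 0 ≤ f x)
    {fstar : ℝ → ℝ}
    (hfs : IsRearrangement (fun x => |f x|) fstar) (s : ℝ) :
    ∫ u in Ioc (0:ℝ) 1, max (fstar u - s) 0 = ∫ x in Q0 n, max (f x - s) 0 := by
  have h := ((ident hf hfs).comp (u := fun y : ℝ => max (y - s) 0) (by fun_prop)).integral_eq
  simp only [Function.comp_def] at h
  rw [h]
  refine setIntegral_congr_fun measurableSet_Icc fun x hx => ?_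
  simp only [abs_of_nonneg (hpos x hx)]

lemma pos_int {X : Type*} [MeasurableSpace X] {μ : Measure X} [IsFiniteMeasure μ] {g : X → ℝ}
    (hg : Integrable g μ) (s : ℝ) : Integrable (fun x => max (g x - s) 0) μ :=
  (hg.sub (integrable_const s)).pos_part

lemma hardy_mul {fstar : ℝ → ℝ} {t : ℝ} (ht : t ∈ Ioc (0:ℝ) 1) :
    ∫ u in Ioc (0:ℝ) t, fstar u = t * hardyAvg fstar t := by
  unfold hardyAvg
  rw [mul_inv_cancel_left₀ ht.1.ne']

lemma maxi {f : (Fin n → ℝ) → ℝ} (hf : IntegrableOn f (Q0 n)) (hpos : ∀ x ∈ Q0 n, 0 ≤ f x)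
    {fstar : ℝ → ℝ}
    (hfs : IsRearrangement (fun x => |f x|) fstar) {t : ℝ} (ht : t ∈ Ioc (0:ℝ) 1)
    {E : Set (Fin n → ℝ)} (hE : E ⊆ Q0 n) (hEt : t ≤ volume.real E) :
    ∫ x in E, f x ≤ hardyAvg fstar t * volume.real E := by
  have hQfin : volume (Q0 n) ≠ ⊤ := by simp [Q0_vol]
  have : IsFiniteMeasure (volume.restrict (Q0 n)) := ⟨by simp [Q0_vol]⟩
  have hEfin : volume E ≠ ⊤ := ne_top_of_le_ne_top hQfin (measure_mono hE)
  have : IsFiniteMeasure (volume.restrict E) := ⟨by simpa using hEfin.lt_top⟩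
  set s := fstar t with hs
  have hsub : Ioc 0 t ⊆ Ioc (0:ℝ) 1 := Ioc_subset_Ioc_right ht.2
  have hsi : IntegrableOn fstar (Ioc 0 t) := (star_int hf hfs).mono_set hsub
  have e1 : ∫ u in Ioc (0:ℝ) 1, max (fstar u - s) 0 = t * hardyAvg fstar t - t * s := by
    have : ∫ u in Ioc (0:ℝ) 1, max (fstar u - s) 0 = ∫ u in Ioc (0:ℝ) t, (fstar u - s) := by
      rw [setIntegral_eq_of_subset_of_forall_sdiff_eq_zero measurableSet_Ioc hsub]
      · refine setIntegral_congr_fun measurableSet_Ioc fun u hu => ?_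
        have := hfs.1 (hsub hu) ht hu.2
        rw [max_eq_left]; linarith
      · intro u hu
        have h1 : t < u := by
          by_contra h
          exact hu.2 ⟨hu.1.1, not_lt.1 h⟩
        have := hfs.1 ht hu.1 h1.le
        rw [max_eq_right]; linarith
    rw [this, integral_sub hsi (integrable_const s), hardy_mul ht]
    simp [ht.1.le]
  have hsa : s ≤ hardyAvg fstar t := by
    have h0 : 0 ≤ ∫ u in Ioc (0:ℝ) 1, max (fstar u - s) 0 :=
      integral_nonneg fun u => le_max_right _ _
    rw [e1] at h0
    have := ht.1
    nlinarith
  have e2 : ∫ x in E, f x - s ≤ ∫ x in Q0 n, max (f x - s) 0 := by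
    calc ∫ x in E, f x - s ≤ ∫ x in E, max (f x - s) 0 :=
          integral_mono ((hf.mono_set hE).sub (integrable_const s)) (pos_int (hf.mono_set hE) s)
            fun x => le_max_left _ _
      _ ≤ _ := setIntegral_mono_set (pos_int hf s)
            (Filter.Eventually.of_forall fun x => le_max_right _ _) (Filter.Eventually.of_forall hE)
  rw [integral_sub (hf.mono_set hE) (integrable_const s), ← star_eq hf hpos hfs, e1] at e2
  simp only [integral_const, measureReal_restrict_apply_univ, smul_eq_mul] at e2
  nlinarith

lemma dy_sub {k : ℕ} {Q : Set (Fin n → ℝ)} (h : IsDyadicSide n k Q) : Q ⊆ Q0 n := by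
  obtain ⟨m, hm, rfl⟩ := h
  intro x hx
  refine ⟨fun i => le_trans ?_ (hx.1 i), fun i => (hx.2 i).trans ?_⟩
  · simp only [Pi.zero_apply]; positivity
  · simp only [Pi.one_apply]
    rw [div_le_one (by positivity)]
    exact_mod_cast hm i

lemma v_bdd {f : (Fin n → ℝ) → ℝ} (hf : IntegrableOn f (Q0 n)) (hpos : ∀ x ∈ Q0 n, 0 ≤ f x)
    (σ : ℝ) : BddAbove {r : ℝ | ∃ k Q, IsDyadicSide n k Q ∧ ((2:ℝ) ^ k)⁻¹ ≤ σ ∧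
    0 < avgOn f Q ∧ r = oscOn f Q / avgOn f Q} := by
  refine ⟨2, ?_⟩
  rintro r ⟨k, Q, hQ, -, ha, rfl⟩
  rw [div_le_iff₀ ha]
  have hs := dy_sub hQ
  have hQm : MeasurableSet Q := by
    obtain ⟨m, hm, rfl⟩ := hQ
    exact measurableSet_Icc
  have hQfin : volume Q ≠ ⊤ :=
    ne_top_of_le_ne_top (by simp [Q0_vol]) (measure_mono hs)
  have : IsFiniteMeasure (volume.restrict Q) := ⟨by simpa using hQfin.lt_top⟩
  have hfi : IntegrableOn f Q := hf.mono_set hs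
  have hne : (volume Q).toReal ≠ 0 := by
    intro h
    simp [avgOn, h] at ha
  set a := avgOn f Q with hadef
  have h1 : ∫ x in Q, |f x - a| ≤ ∫ x in Q, (f x + a) := by
    refine setIntegral_mono_on (hfi.sub (integrable_const a)).abs
      (hfi.add (integrable_const a)) hQm fun x hx => ?_
    rw [abs_le]
    have := hpos x (hs hx)
    constructor <;> linarith
  have h2 : ∫ x in Q, (f x + a) = (∫ x in Q, f x) + (volume Q).toReal * a := by
    rw [integral_add hfi (integrable_const a)]
    simp [Measure.real]
  have h3 : oscOn f Q = (volume Q).toReal⁻¹ * ∫ x in Q, |f x - a| := rfl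
  have h4 : a = (volume Q).toReal⁻¹ * ∫ x in Q, f x := rfl
  rw [h3]
  calc _ ≤ (volume Q).toReal⁻¹ * ((∫ x in Q, f x) + (volume Q).toReal * a) := by
        rw [← h2]; gcongr
    _ = (volume Q).toReal⁻¹ * (∫ x in Q, f x) + a := by field_simp
    _ = 2 * a := by rw [← h4]; ring

lemma v_nonneg {f : (Fin n → ℝ) → ℝ} (σ : ℝ) : 0 ≤ vGR f σ := by
  refine Real.sSup_nonneg ?_
  rintro r ⟨k, Q, -, -, ha, rfl⟩
  refine div_nonneg ?_ ha.le
  exact mul_nonneg (by positivity) (integral_nonneg fun x => abs_nonneg _)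

lemma half_abs {X : Type*} [MeasurableSpace X] {μ : Measure X} [IsFiniteMeasure μ] {g : X → ℝ}
    (hg : Integrable g μ) (a : ℝ) (h0 : ∫ x, (g x - a) ∂μ = 0) :
    ∫ x, |g x - a| ∂μ = 2 * ∫ x, max (g x - a) 0 ∂μ := by
  have : ∀ x, |g x - a| = 2 * max (g x - a) 0 - (g x - a) := by
    intro x
    rcases le_total (g x - a) 0 with h | h
    · rw [abs_of_nonpos h, max_eq_right h]; ring
    · rw [abs_of_nonneg h, max_eq_left h]; ring
  simp only [this]
  have hi : Integrable (fun x => g x - a) μ := hg.sub (integrable_const a)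
  rw [integral_sub ((pos_int hg a).const_mul 2) hi, h0,
    integral_const_mul, sub_zero]

lemma cell_osc {f : (Fin n → ℝ) → ℝ} (hf : IntegrableOn f (Q0 n)) (hpos : ∀ x ∈ Q0 n, 0 ≤ f x)
    {σ α : ℝ} {k : ℕ} {x : Fin n → ℝ} (hx : x ∈ U n) (hσ : ((2:ℝ) ^ k)⁻¹ ≤ σ)
    (h0 : 0 < ∫ y in cell k x, f y) (h1 : ∫ y in cell k x, f y ≤ α * ((2:ℝ) ^ k)⁻¹ ^ n) :
    ∫ y in cell k x, max (f y - α) 0 ≤ 1 / 2 * (vGR f σ * α) * ((2:ℝ) ^ k)⁻¹ ^ n := by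
  set V : ℝ := ((2:ℝ) ^ k)⁻¹ ^ n with hV
  have hVpos : 0 < V := by positivity
  have hs : cell k x ⊆ Q0 n := (cell_sub hx).trans U_sub
  have hfin : volume (cell k x) ≠ ⊤ :=
    ne_top_of_le_ne_top (by simp [Q0_vol]) (measure_mono hs)
  have : IsFiniteMeasure (volume.restrict (cell k x)) := ⟨by simpa using hfin.lt_top⟩
  have hfi : IntegrableOn f (cell k x) := hf.mono_set hs
  have hcv : (volume (ccube k x)).toReal = V := ccube_vol k x
  set a := avgOn f (ccube k x) with ha
  have ha1 : a = V⁻¹ * ∫ y in cell k x, f y := by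
    rw [ha, avgOn, hcv, setIntegral_congr_set (cell_ae k x)]
  have hosc : oscOn f (ccube k x) = V⁻¹ * ∫ y in cell k x, |f y - a| := by
    rw [oscOn, hcv, setIntegral_congr_set (cell_ae k x)]
  have hapos : 0 < a := by rw [ha1]; positivity
  have haα : a ≤ α := by
    rw [ha1, inv_mul_le_iff₀ hVpos]; linarith
  have hz : ∫ y in cell k x, (f y - a) = 0 := by
    rw [integral_sub hfi (integrable_const a)]
    simp only [integral_const, measureReal_restrict_apply_univ, smul_eq_mul]
    rw [cell_vol, ha1, ← hV, mul_inv_cancel_left₀ hVpos.ne', sub_self]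
  have hv : oscOn f (ccube k x) ≤ vGR f σ * a := by
    rw [← div_le_iff₀ hapos]
    exact le_csSup (v_bdd hf hpos σ) ⟨k, _, ccube_dy hx, hσ, hapos, rfl⟩
  rw [hosc, half_abs hfi a hz, inv_mul_le_iff₀ hVpos] at hv
  have hm : ∫ y in cell k x, max (f y - α) 0 ≤ ∫ y in cell k x, max (f y - a) 0 := by
    refine integral_mono (pos_int hfi α) (pos_int hfi a) fun y => ?_
    simp only
    gcongr
  have hva : vGR f σ * a ≤ vGR f σ * α := mul_le_mul_of_nonneg_left haα (v_nonneg σ)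
  nlinarith

def Hot (f : (Fin n → ℝ) → ℝ) (α : ℝ) (k : ℕ) (y : Fin n → ℝ) : Prop :=
  α * ((2:ℝ) ^ k)⁻¹ ^ n < ∫ z in cell k y, f z

def Bad (f : (Fin n → ℝ) → ℝ) (α : ℝ) (k : ℕ) (x : Fin n → ℝ) : Prop :=
  ∃ y ∈ cell k x, Hot f α (k + 1) y

lemma Bad.congr {f : (Fin n → ℝ) → ℝ} {α : ℝ} {k : ℕ} {x x' : Fin n → ℝ}
    (h : key k x = key k x') (hb : Bad f α k x) : Bad f α k x' := by
  obtain ⟨y, hy, hh⟩ := hb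
  exact ⟨y, Eq.trans hy h, hh⟩

lemma cz {f : (Fin n → ℝ) → ℝ} (hn : 1 ≤ n) (hf : IntegrableOn f (Q0 n))
    (hpos : ∀ x ∈ Q0 n, 0 ≤ f x)
    {t α : ℝ} (ht : t ∈ Ioc (0:ℝ) 1)
    (hmax : ∀ E : Set (Fin n → ℝ), E ⊆ Q0 n → t ≤ volume.real E →
      ∫ x in E, f x ≤ α * volume.real E) :
    ∫ x in Q0 n, max (f x - α) 0 ≤
      1 / 2 * (vGR f (min (2 * t ^ ((n : ℝ))⁻¹) 1) * α) * (2 ^ n * t) := by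
  set σ := min (2 * t ^ ((n : ℝ))⁻¹) 1 with hσ
  have fm : IsFiniteMeasure (volume.restrict (Q0 n)) := ⟨by simp [Q0_vol]⟩
  have hf0 : ∀ E ⊆ Q0 n, MeasurableSet E → 0 ≤ ∫ x in E, f x := fun E hE hm =>
    setIntegral_nonneg hm fun x hx => hpos x (hE hx)
  have hQ : ∫ x in Q0 n, f x ≤ α := by
    have := hmax (Q0 n) subset_rfl (by simp [Measure.real, Q0_vol, ht.2])
    simpa [Measure.real, Q0_vol] using this
  have hα : 0 ≤ α := (hf0 _ subset_rfl measurableSet_Icc).trans hQ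
  have hv := v_nonneg (f := f) σ
  have hU0 : ∀ x ∈ U n, ¬ Hot f α 0 x := by
    intro x hx h
    rw [Hot, cell_zero hx, setIntegral_congr_set U_ae] at h
    simp at h
    linarith
  -- maximal bad cubes
  let I := {p : ℕ × (Fin n → ℤ) // ∃ x ∈ U n, key p.1 x = p.2 ∧ Bad f α p.1 x ∧
    ∀ j < p.1, ¬ Bad f α j x}
  have hI : ∀ p : I, ∃ x ∈ U n, key p.1.1 x = p.1.2 ∧ Bad f α p.1.1 x ∧
    ∀ j < p.1.1, ¬ Bad f α j x := fun p => p.2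
  choose X hXU hXk hXB hXmin using hI
  choose Y hY hYhot using hXB
  have hYU : ∀ p, Y p ∈ U n := fun p => cell_sub (hXU p) (hY p)
  let P : I → Set (Fin n → ℝ) := fun p => cell p.1.1 (X p)
  let C : I → Set (Fin n → ℝ) := fun p => cell (p.1.1 + 1) (Y p)
  have hPU : ∀ p, P p ⊆ U n := fun p => cell_sub (hXU p)
  have hCP : ∀ p, C p ⊆ P p := fun p z hz =>
    (key_mono (Nat.le_succ _) (show key (p.1.1+1) z = key (p.1.1+1) (Y p) from hz)).trans (hY p)
  have hPm : ∀ p, MeasurableSet (P p) := fun p => cell_meas _ _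
  have hCm : ∀ p, MeasurableSet (C p) := fun p => cell_meas _ _
  have hPQ : ∀ p, P p ⊆ Q0 n := fun p => (hPU p).trans U_sub
  have hCQ : ∀ p, C p ⊆ Q0 n := fun p => (hCP p).trans (hPQ p)
  have hXbad : ∀ p, Bad f α p.1.1 (X p) := fun p => ⟨Y p, hY p, hYhot p⟩
  have hPd : Pairwise (Function.onFun Disjoint P) := by
    intro p q hpq
    rw [Function.onFun, Set.disjoint_left]
    intro z hzp hzq
    apply hpq
    have hzp' : key p.1.1 z = key p.1.1 (X p) := hzp
    have hzq' : key q.1.1 z = key q.1.1 (X q) := hzq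
    have hk : p.1.1 = q.1.1 := by
      rcases lt_trichotomy p.1.1 q.1.1 with h | h | h
      · exact absurd ((hXbad p).congr (hzp'.symm.trans (key_mono h.le hzq'))) (hXmin q _ h)
      · exact h
      · exact absurd ((hXbad q).congr (hzq'.symm.trans (key_mono h.le hzp'))) (hXmin p _ h)
    apply Subtype.ext
    apply Prod.ext hk
    rw [← hXk p, ← hXk q, ← hzp', ← hzq', hk]
  have hCd : Pairwise (Function.onFun Disjoint C) := fun p q hpq =>
    (hPd hpq).mono (hCP p) (hCP q)
  -- total measure of chosen children
  have hA : ∀ F : Finset I, ∑ p ∈ F, ((2:ℝ) ^ (p.1.1 + 1))⁻¹ ^ n ≤ t := by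
    intro F
    rcases F.eq_empty_or_nonempty with rfl | hF
    · simpa using ht.1.le
    by_contra hlt
    push Not at hlt
    have hvol : volume.real (⋃ p ∈ F, C p) = ∑ p ∈ F, ((2:ℝ) ^ (p.1.1 + 1))⁻¹ ^ n := by
      rw [measureReal_biUnion_finset (fun p _ q _ hpq => hCd hpq) (fun p _ => hCm p)
        (fun p _ => ne_top_of_le_ne_top (by simp [Q0_vol]) (measure_mono (hCQ p)))]
      exact Finset.sum_congr rfl fun p _ => cell_vol _ _
    have h1 := hmax (⋃ p ∈ F, C p) (iUnion₂_subset fun p _ => hCQ p) (by rw [hvol]; exact hlt.le)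
    rw [hvol, integral_biUnion_finset F (fun p _ => hCm p) (fun p _ q _ hpq => hCd hpq)
      (fun p _ => hf.mono_set (hCQ p)), Finset.mul_sum] at h1
    exact absurd (Finset.sum_lt_sum_of_nonempty hF fun p _ => hYhot p) (not_lt.2 h1)
  have hW : ∀ k : ℕ, ((2:ℝ) ^ k)⁻¹ ^ n = 2 ^ n * ((2:ℝ) ^ (k + 1))⁻¹ ^ n := by
    intro k
    rw [← mul_pow]
    congr 1
    rw [pow_succ]
    field_simp
  have hA2 : ∀ F : Finset I, ∑ p ∈ F, ((2:ℝ) ^ p.1.1)⁻¹ ^ n ≤ 2 ^ n * t := by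
    intro F
    rw [Finset.sum_congr rfl fun p _ => hW p.1.1, ← Finset.mul_sum]
    exact mul_le_mul_of_nonneg_left (hA F) (by positivity)
  have hside : ∀ p : I, ((2:ℝ) ^ p.1.1)⁻¹ ≤ σ := by
    intro p
    refine le_min ?_ (inv_le_one_of_one_le₀ (one_le_pow₀ (by norm_num)))
    have h := hA2 {p}
    rw [Finset.sum_singleton] at h
    have h2 : (2 * t ^ ((n : ℝ))⁻¹) ^ n = 2 ^ n * t := by
      rw [mul_pow, Real.rpow_inv_natCast_pow ht.1.le (by omega)]
    rw [← h2] at h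
    have := Real.rpow_nonneg ht.1.le ((n:ℝ)⁻¹)
    exact le_of_pow_le_pow_left₀ (by omega) (by positivity) h
  have hB : ∀ p : I, ∫ y in P p, max (f y - α) 0 ≤
      1 / 2 * (vGR f σ * α) * ((2:ℝ) ^ p.1.1)⁻¹ ^ n := by
    intro p
    refine cell_osc hf hpos (hXU p) (hside p) ?_ ?_
    · have h1 : ∫ y in C p, f y ≤ ∫ y in P p, f y :=
        setIntegral_mono_set (hf.mono_set (hPQ p))
          ((ae_restrict_iff' (hPm p)).2 (Filter.Eventually.of_forall fun y hy => hpos y (hPQ p hy)))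
          (Filter.Eventually.of_forall (hCP p))
      have h2 : 0 ≤ α * ((2:ℝ) ^ (p.1.1+1))⁻¹ ^ n := by positivity
      exact (h2.trans_lt (hYhot p)).trans_le h1
    · by_contra hh
      push Not at hh
      have hhot : Hot f α p.1.1 (X p) := hh
      rcases hk : p.1.1 with _ | j
      · rw [hk] at hhot
        exact hU0 _ (hXU p) hhot
      · refine hXmin p j (by omega) ⟨X p, mem_cell _ _, ?_⟩
        rw [← hk]; exact hhot
  -- covering
  have hcov : ∀ᵐ x ∂(volume.restrict (Q0 n)), x ∉ ⋃ p, P p → max (f x - α) 0 = 0 := by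
    have hg : LocallyIntegrable ((Q0 n).indicator f) volume :=
      (hf.integrable_indicator measurableSet_Icc).locallyIntegrable
    have hUae : ∀ᵐ x ∂(volume.restrict (Q0 n)), x ∈ U n := by
      rw [← Measure.restrict_congr_set (U_ae (n := n))]
      exact ae_restrict_mem (MeasurableSet.univ_pi fun i => measurableSet_Ico)
    filter_upwards [hUae, ae_restrict_of_ae (leb hg)] with x hxU hlim hx
    apply max_eq_right
    by_contra hc
    push Not at hc
    apply hx
    rw [indicator_of_mem (U_sub hxU)] at hlim
    obtain ⟨k, hk⟩ := (hlim.eventually (lt_mem_nhds (show α < f x by linarith))).exists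
    have hhot : Hot f α k x := by
      rw [setAverage_eq, ccube_vol, smul_eq_mul, ← setIntegral_congr_set (cell_ae k x),
        setIntegral_congr_fun (g := f) (cell_meas k x) (fun y hy => indicator_of_mem
          (U_sub (cell_sub hxU hy)) f), lt_inv_mul_iff₀ (by positivity)] at hk
      rw [Hot, mul_comm]
      exact hk
    have hex : ∃ j, Bad f α j x := by
      rcases k with _ | j
      · exact absurd hhot (hU0 x hxU)
      · exact ⟨j, x, mem_cell _ _, hhot⟩
    classical
    let p : I := ⟨(Nat.find hex, key (Nat.find hex) x), x, hxU, rfl, Nat.find_spec hex,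
      fun j hj => Nat.find_min hex hj⟩
    refine mem_iUnion.2 ⟨p, ?_⟩
    exact (hXk p).symm
  have hUn : (⋃ p, P p) ⊆ Q0 n := iUnion_subset hPQ
  have hpi : IntegrableOn (fun x => max (f x - α) 0) (Q0 n) := pos_int hf α
  have hsum := hasSum_integral_iUnion hPm hPd (hpi.mono_set hUn)
  have heq : ∫ x in Q0 n, max (f x - α) 0 = ∫ x in ⋃ p, P p, max (f x - α) 0 := by
    refine setIntegral_eq_of_subset_of_ae_sdiff_eq_zero
      measurableSet_Icc.nullMeasurableSet hUn ?_
    filter_upwards [(ae_restrict_iff' (measurableSet_Icc (a := (0 : Fin n → ℝ)) (b := 1))).1 hcov]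
      with x hx hx2
    exact hx hx2.1 hx2.2
  rw [heq]
  refine hasSum_le_of_sum_le hsum fun F => ?_
  calc ∑ p ∈ F, ∫ y in P p, max (f y - α) 0 ≤
      ∑ p ∈ F, 1 / 2 * (vGR f σ * α) * ((2:ℝ) ^ p.1.1)⁻¹ ^ n := Finset.sum_le_sum fun p _ => hB p
    _ = 1 / 2 * (vGR f σ * α) * ∑ p ∈ F, ((2:ℝ) ^ p.1.1)⁻¹ ^ n := by rw [Finset.mul_sum]
    _ ≤ _ := mul_le_mul_of_nonneg_left (hA2 F) (by positivity)

end GRaux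

/-- **Theorem 3.** For integrable `f : [0,1]ⁿ → [0,∞)` and every `t ∈ (0,1]`,
`(1/t) ∫_0^t |f*(u) − f**(t)| du ≤ 2ⁿ · v(f;σ_t) · f**(t)` where `σ_t = min(2 t^{1/n}, 1)`. -/
theorem rearrangement_oscillation_bound (n : ℕ) (hn : 1 ≤ n)
    (f : (Fin n → ℝ) → ℝ) (hf : IntegrableOn f (Q0 n)) (hpos : ∀ x ∈ Q0 n, 0 ≤ f x)
    (fstar : ℝ → ℝ) (hfs : IsRearrangement (fun x => |f x|) fstar) :
    ∀ t ∈ Set.Ioc (0:ℝ) 1,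
      t⁻¹ * ∫ u in Set.Ioc (0:ℝ) t, |fstar u - hardyAvg fstar t| ≤
        2 ^ n * vGR f (min (2 * t ^ ((n : ℝ))⁻¹) 1) * hardyAvg fstar t := by
  intro t ht
  have hsub : Ioc 0 t ⊆ Ioc (0:ℝ) 1 := Ioc_subset_Ioc_right ht.2
  have hs1 := GRaux.star_int hf hfs
  have hsi : IntegrableOn fstar (Ioc 0 t) := hs1.mono_set hsub
  have hcz := GRaux.cz hn hf hpos ht
    (fun E hE hEt => GRaux.maxi hf hpos hfs ht hE hEt)
  have hz : ∫ u in Ioc (0:ℝ) t, (fstar u - hardyAvg fstar t) = 0 := by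
    rw [integral_sub hsi (integrable_const _), GRaux.hardy_mul ht]
    simp [ht.1.le]
  rw [GRaux.half_abs hsi _ hz, inv_mul_le_iff₀ ht.1]
  rw [← GRaux.star_eq hf hpos hfs] at hcz
  have hm : ∫ u in Ioc (0:ℝ) t, max (fstar u - hardyAvg fstar t) 0 ≤
      ∫ u in Ioc (0:ℝ) 1, max (fstar u - hardyAvg fstar t) 0 :=
    setIntegral_mono_set (GRaux.pos_int hs1 _)
      (Filter.Eventually.of_forall fun x => le_max_right _ _) (Filter.Eventually.of_forall hsub)
  linarith
end
end

section
/- There exist constants c1, c2, c3, c4 > 0 depending only on the dimension n, with c4 > 1, such that for every integrable f : Q0 = [0,1]^n → [0,∞) and every t ∈ (0, 1/c4], one has f^{**}(t) ≤ c1 · f_{Q0} · exp( c2 ∫_{c3 t^{1/n}}^1 v(f;σ) dσ/σ ). (For instance c1 = 2^n e^{2^n e + 1}, c2 = 2^{n−1} e n, c3 = 2 e^{1/n}, c4 = 2^n e^2 work.) -/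
open MeasureTheory Set Real

noncomputable section

/-- Closed dyadic cube. -/
def cC (n k : ℕ) (m : Fin n → ℕ) : Set (Fin n → ℝ) :=
  Set.Icc (fun i => (m i : ℝ) / 2 ^ k) (fun i => ((m i : ℝ) + 1) / 2 ^ k)

/-- Half-open dyadic cube. -/
def hC (n k : ℕ) (m : Fin n → ℕ) : Set (Fin n → ℝ) :=
  Set.pi Set.univ (fun i => Set.Ico ((m i : ℝ) / 2 ^ k) (((m i : ℝ) + 1) / 2 ^ k))

lemma mem_hC {n k : ℕ} {m : Fin n → ℕ} {x : Fin n → ℝ} :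
    x ∈ hC n k m ↔ ∀ i, (m i : ℝ) ≤ 2 ^ k * x i ∧ 2 ^ k * x i < m i + 1 := by
  have h : (0:ℝ) < 2 ^ k := by positivity
  simp only [hC, Set.mem_pi, Set.mem_univ, true_imp_iff, Set.mem_Ico, div_le_iff₀ h, lt_div_iff₀ h,
    mul_comm (x _)]

lemma hC_ae (n k : ℕ) (m : Fin n → ℕ) : hC n k m =ᵐ[volume] cC n k m :=
  Measure.univ_pi_Ico_ae_eq_Icc

lemma hC_meas (n k : ℕ) (m : Fin n → ℕ) : MeasurableSet (hC n k m) :=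
  MeasurableSet.univ_pi fun _ => measurableSet_Ico

lemma vol_cC (n k : ℕ) (m : Fin n → ℕ) :
    volume (cC n k m) = ENNReal.ofReal (((2:ℝ) ^ (n * k))⁻¹) := by
  rw [cC, Real.volume_Icc_pi]
  have : ∀ i, ((m i : ℝ) + 1) / 2 ^ k - (m i : ℝ) / 2 ^ k = (2 ^ k)⁻¹ := fun i => by ring
  simp only [this, Finset.prod_const, Finset.card_univ, Fintype.card_fin]
  rw [← ENNReal.ofReal_pow (by positivity), inv_pow, ← pow_mul, mul_comm k n]

lemma vol_hC (n k : ℕ) (m : Fin n → ℕ) :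
    volume (hC n k m) = ENNReal.ofReal (((2:ℝ) ^ (n * k))⁻¹) := by
  rw [measure_congr (hC_ae n k m), vol_cC]

lemma hC_nested {n j k : ℕ} (hjk : j ≤ k) {m m' : Fin n → ℕ} {x : Fin n → ℝ}
    (hx : x ∈ hC n k m) (hx' : x ∈ hC n j m') : hC n k m ⊆ hC n j m' := by
  intro y hy
  rw [mem_hC] at *
  intro i
  obtain ⟨d, rfl⟩ := Nat.exists_eq_add_of_le hjk
  obtain ⟨h1, h2⟩ := hx i
  obtain ⟨h3, h4⟩ := hx' i
  obtain ⟨h5, h6⟩ := hy i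
  have hd : (0:ℝ) < 2 ^ d := by positivity
  rw [pow_add] at h1 h2 h5 h6
  have a1 : (m' i : ℝ) * 2 ^ d < m i + 1 := by nlinarith
  have a2 : (m i : ℝ) < (m' i + 1) * 2 ^ d := by nlinarith
  have b1 : m' i * 2 ^ d ≤ m i := by
    have : m' i * 2 ^ d < m i + 1 := by exact_mod_cast a1
    omega
  have b2 : m i + 1 ≤ (m' i + 1) * 2 ^ d := by
    have : m i < (m' i + 1) * 2 ^ d := by exact_mod_cast a2
    omega
  have b1' : (m' i : ℝ) * 2 ^ d ≤ m i := by exact_mod_cast b1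
  have b2' : (m i : ℝ) + 1 ≤ (m' i + 1) * 2 ^ d := by exact_mod_cast b2
  constructor
  · by_contra! h
    nlinarith
  · by_contra! h
    nlinarith

lemma hC_exists (n k : ℕ) {x : Fin n → ℝ} (hx : ∀ i, 0 ≤ x i ∧ x i < 1) :
    ∃ m : Fin n → ℕ, (∀ i, m i < 2 ^ k) ∧ x ∈ hC n k m := by
  have h : (0:ℝ) < 2 ^ k := by positivity
  refine ⟨fun i => ⌊2 ^ k * x i⌋₊, fun i => ?_, ?_⟩
  · have := (hx i).1
    rw [Nat.floor_lt (by positivity)]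
    push_cast
    nlinarith [(hx i).2]
  · rw [mem_hC]
    intro i
    have := (hx i).1
    exact ⟨Nat.floor_le (by positivity), Nat.lt_floor_add_one _⟩

lemma cC_sub {n k : ℕ} {m : Fin n → ℕ} (hm : ∀ i, m i < 2 ^ k) : cC n k m ⊆ Q0 n := by
  intro x hx
  have h : (0:ℝ) < 2 ^ k := by positivity
  refine ⟨fun i => le_trans (by positivity) (hx.1 i), fun i => (hx.2 i).trans ?_⟩
  have : ((m i + 1 : ℕ) : ℝ) ≤ ((2 ^ k : ℕ) : ℝ) := by exact_mod_cast hm i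
  push_cast at this
  simpa [div_le_one h] using this

lemma hC_sub_cC (n k : ℕ) (m : Fin n → ℕ) : hC n k m ⊆ cC n k m := by
  rw [cC, ← Set.pi_univ_Icc]
  exact Set.pi_mono fun i _ => Set.Ico_subset_Icc_self

lemma cC_ball (n k : ℕ) (m : Fin n → ℕ) :
    cC n k m = Metric.closedBall (fun i => ((m i : ℝ) + 2⁻¹) / 2 ^ k) (((2:ℝ) ^ (k+1))⁻¹) := by
  rw [closedBall_pi _ (by positivity), cC, ← Set.pi_univ_Icc]
  congr 1
  ext1 i
  rw [Real.closedBall_eq_Icc]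
  congr 1 <;> (rw [pow_succ]; field_simp; ring)

section vfacts
variable {n : ℕ} {f : (Fin n → ℝ) → ℝ} (hf : IntegrableOn f (Q0 n)) (h0 : ∀ x ∈ Q0 n, 0 ≤ f x)
include hf h0

lemma cube_facts {k : ℕ} {m : Fin n → ℕ} (hm : ∀ i, m i < 2 ^ k) :
    0 ≤ avgOn f (cC n k m) ∧ 0 ≤ oscOn f (cC n k m) ∧
    oscOn f (cC n k m) ≤ 2 * avgOn f (cC n k m) := by
  have hs := cC_sub hm
  have hfi : IntegrableOn f (cC n k m) := hf.mono_set hs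
  have hmeas : MeasurableSet (cC n k m) := measurableSet_Icc
  have hnn : 0 ≤ ∫ x in cC n k m, f x := setIntegral_nonneg hmeas fun x hx => h0 x (hs hx)
  have hv : (volume (cC n k m)).toReal = ((2:ℝ) ^ (n * k))⁻¹ := by
    rw [vol_cC, ENNReal.toReal_ofReal (by positivity)]
  have hvp : 0 < (volume (cC n k m)).toReal := by rw [hv]; positivity
  have hfin : volume (cC n k m) ≠ ⊤ := by rw [vol_cC]; exact ENNReal.ofReal_ne_top
  have ha : 0 ≤ avgOn f (cC n k m) := by unfold avgOn; positivity
  refine ⟨ha, ?_, ?_⟩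
  · unfold oscOn
    have : 0 ≤ ∫ x in cC n k m, |f x - avgOn f (cC n k m)| := integral_nonneg fun x => abs_nonneg _
    positivity
  · have hc : IntegrableOn (fun _ => avgOn f (cC n k m)) (cC n k m) := integrableOn_const hfin
    have h1 : ∫ x in cC n k m, |f x - avgOn f (cC n k m)|
        ≤ ∫ x in cC n k m, (f x + avgOn f (cC n k m)) := by
      refine setIntegral_mono_on (hfi.sub hc).abs (hfi.add hc) hmeas fun x hx => ?_
      have := h0 x (hs hx)
      rw [abs_le]; constructor <;> linarith
    rw [integral_add hfi hc, setIntegral_const, measureReal_def, smul_eq_mul] at h1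
    have h2 : (volume (cC n k m)).toReal * avgOn f (cC n k m) = ∫ x in cC n k m, f x := by
      unfold avgOn; field_simp
    rw [h2] at h1
    calc oscOn f (cC n k m) ≤ (volume (cC n k m)).toReal⁻¹ *
          ((∫ x in cC n k m, f x) + ∫ x in cC n k m, f x) := by
          unfold oscOn; gcongr
      _ = _ := by unfold avgOn; ring

lemma v_mem_bd {σ r : ℝ} (hr : r ∈ {r : ℝ | ∃ k Q, IsDyadicSide n k Q ∧ ((2:ℝ) ^ k)⁻¹ ≤ σ ∧
    0 < avgOn f Q ∧ r = oscOn f Q / avgOn f Q}) : 0 ≤ r ∧ r ≤ 2 := by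
  obtain ⟨k, Q, ⟨m, hm, rfl⟩, -, hp, rfl⟩ := hr
  have := cube_facts hf h0 hm
  unfold cC at this
  refine ⟨div_nonneg this.2.1 this.1, ?_⟩
  rw [div_le_iff₀ hp]; exact this.2.2

lemma v_nonneg (σ : ℝ) : 0 ≤ vGR f σ := Real.sSup_nonneg fun _ hr => (v_mem_bd hf h0 hr).1

lemma v_le_two (σ : ℝ) : vGR f σ ≤ 2 := Real.sSup_le (fun r hr => (v_mem_bd hf h0 hr).2) (by norm_num)

lemma v_mono : Monotone (vGR f) := by
  intro a b hab
  refine Real.sSup_le (fun r hr => ?_) (v_nonneg hf h0 b)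
  refine le_csSup ⟨2, fun r hr => (v_mem_bd hf h0 hr).2⟩ ?_
  obtain ⟨k, Q, hQ, hk, h⟩ := hr
  exact ⟨k, Q, hQ, hk.trans hab, h⟩

lemma osc_le_v {k : ℕ} {m : Fin n → ℕ} (hm : ∀ i, m i < 2 ^ k) {σ : ℝ} (hσ : ((2:ℝ) ^ k)⁻¹ ≤ σ) :
    oscOn f (cC n k m) ≤ vGR f σ * avgOn f (cC n k m) := by
  have hc := cube_facts hf h0 hm
  rcases hc.1.eq_or_lt with h | h
  · rw [← h] at hc ⊢; linarith
  · rw [← div_le_iff₀ h]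
    exact le_csSup ⟨2, fun r hr => (v_mem_bd hf h0 hr).2⟩ ⟨k, _, ⟨m, hm, rfl⟩, hσ, h, rfl⟩

lemma v_int {a b : ℝ} (ha : 0 < a) (hb : 0 < b) :
    IntervalIntegrable (fun σ => vGR f σ / σ) volume a b := by
  simp only [div_eq_mul_inv]
  refine IntervalIntegrable.mul_continuousOn ((v_mono hf h0).intervalIntegrable) ?_
  refine ContinuousOn.inv₀ continuousOn_id fun x hx => ?_
  have := (Set.mem_Icc.1 hx).1
  have : 0 < x := lt_of_lt_of_le (lt_min ha hb) this
  exact this.ne'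

lemma v_sum (J : ℕ) : ∑ j ∈ Finset.range (J + 1), vGR f (((2:ℝ) ^ j)⁻¹) ≤
    2 + (Real.log 2)⁻¹ * ∫ σ in (((2:ℝ) ^ J)⁻¹)..1, vGR f σ / σ := by
  induction J with
  | zero => simpa using v_le_two hf h0 1
  | succ J ih =>
    rw [Finset.sum_range_succ]
    have p1 : (0:ℝ) < (2 ^ J)⁻¹ := by positivity
    have p2 : (0:ℝ) < (2 ^ (J+1))⁻¹ := by positivity
    have p3 : ((2:ℝ) ^ (J+1))⁻¹ ≤ (2 ^ J)⁻¹ := by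
      rw [pow_succ, mul_inv]; linarith
    rw [← intervalIntegral.integral_add_adjacent_intervals (v_int hf h0 p2 p1)
      (v_int hf h0 p1 one_pos)]
    have hl : 0 < Real.log 2 := Real.log_pos (by norm_num)
    have key : vGR f (((2:ℝ) ^ (J+1))⁻¹) * Real.log 2 ≤
        ∫ σ in (((2:ℝ) ^ (J+1))⁻¹)..((2:ℝ) ^ J)⁻¹, vGR f σ / σ := by
      have : ∫ σ in (((2:ℝ) ^ (J+1))⁻¹)..((2:ℝ) ^ J)⁻¹, vGR f (((2:ℝ) ^ (J+1))⁻¹) * σ⁻¹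
          = vGR f (((2:ℝ) ^ (J+1))⁻¹) * Real.log 2 := by
        rw [intervalIntegral.integral_const_mul, integral_inv_of_pos p2 p1]
        congr 2
        rw [pow_succ]; field_simp
      rw [← this]
      refine intervalIntegral.integral_mono_on p3 ?_ (v_int hf h0 p2 p1) fun x hx => ?_
      · refine IntervalIntegrable.const_mul ?_ _
        refine ContinuousOn.intervalIntegrable (ContinuousOn.inv₀ continuousOn_id fun x hx => ?_)
        rw [Set.uIcc_of_le p3] at hx
        exact (lt_of_lt_of_le p2 hx.1).ne'
      · rw [div_eq_mul_inv]
        have : 0 < x := lt_of_lt_of_le p2 hx.1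
        gcongr
        exact v_mono hf h0 hx.1
    have : vGR f (((2:ℝ) ^ (J+1))⁻¹) ≤ (Real.log 2)⁻¹ *
        ∫ σ in (((2:ℝ) ^ (J+1))⁻¹)..((2:ℝ) ^ J)⁻¹, vGR f σ / σ := by
      rw [inv_mul_eq_div, le_div_iff₀ hl]; exact key
    rw [mul_add]
    linarith

end vfacts

lemma cmp_measures {X ι : Type*} [MeasurableSpace X] [Countable ι] (μ ν : Measure X) (S : Set ι)
    (C : ι → Set X) (hd : S.PairwiseDisjoint C) (hm : ∀ i, MeasurableSet (C i))
    (h : ∀ i ∈ S, μ (C i) ≤ ν (C i)) : μ (⋃ i ∈ S, C i) ≤ ν (⋃ i ∈ S, C i) := by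
  rw [measure_biUnion S.to_countable hd fun i _ => hm i,
    measure_biUnion S.to_countable hd fun i _ => hm i]
  exact ENNReal.tsum_le_tsum fun i => h i i.2

section core
variable {n : ℕ} {f : (Fin n → ℝ) → ℝ} (hf : IntegrableOn f (Q0 n)) (h0 : ∀ x ∈ Q0 n, 0 ≤ f x)
include hf h0

lemma cube_est {α : ℝ} {k : ℕ} {m : Fin n → ℕ} (hm : ∀ i, m i < 2 ^ k) {σ : ℝ}
    (hσ : ((2:ℝ) ^ k)⁻¹ ≤ σ)
    (hE : 2 * volume ({x ∈ Q0 n | α < f x} ∩ cC n k m) ≤ volume (cC n k m)) :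
    ∫ x in cC n k m, max (f x - α) 0 ≤ 3 * vGR f σ * ∫ x in cC n k m, f x := by
  have hs := cC_sub hm
  have hfi : IntegrableOn f (cC n k m) := hf.mono_set hs
  have hmeas : MeasurableSet (cC n k m) := measurableSet_Icc
  have hv : (volume (cC n k m)).toReal = ((2:ℝ) ^ (n * k))⁻¹ := by
    rw [vol_cC, ENNReal.toReal_ofReal (by positivity)]
  have hfin : volume (cC n k m) ≠ ⊤ := by rw [vol_cC]; exact ENNReal.ofReal_ne_top
  have hosc := osc_le_v hf h0 hm hσ
  set Q := cC n k m with hQ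
  set a := avgOn f Q with ha
  set V := (volume Q).toReal with hV
  have hvp : 0 < V := by rw [hv]; positivity
  have hosc' : ∫ x in Q, |f x - a| ≤ vGR f σ * ∫ x in Q, f x := by
    have h1 : ∫ x in Q, |f x - a| = V * oscOn f Q := by unfold oscOn; rw [← hV]; field_simp; rfl
    have h2 : ∫ x in Q, f x = V * a := by rw [ha]; unfold avgOn; rw [← hV]; field_simp
    rw [h1, h2]
    nlinarith
  have hc : ∀ c : ℝ, IntegrableOn (fun _ => c) Q := fun c => integrableOn_const hfin
  have hai : IntegrableOn (fun x => |f x - a|) Q := (hfi.sub (hc a)).abs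
  have hpos : 0 ≤ ∫ x in Q, |f x - a| := integral_nonneg fun x => abs_nonneg _
  have h1 : ∫ x in Q, max (f x - α) 0 ≤ ∫ x in Q, (|f x - a| + max (a - α) 0) := by
    refine setIntegral_mono_on (hfi.sub (hc α)).pos_part (hai.add (hc _)) hmeas fun x hx => ?_
    have := le_abs_self (f x - a)
    have := abs_nonneg (f x - a)
    have := le_max_left (a - α) 0
    have := le_max_right (a - α) 0
    exact max_le (by linarith) (by linarith)
  rw [integral_add hai (hc _), setIntegral_const, measureReal_def, smul_eq_mul, ← hV] at h1
  have h2 : V * max (a - α) 0 ≤ 2 * ∫ x in Q, |f x - a| := by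
    rcases le_total (a - α) 0 with h | h
    · rw [max_eq_right h]; linarith
    rw [max_eq_left h]
    have mk := mul_meas_ge_le_integral_of_nonneg (μ := volume.restrict Q)
      (f := fun x => |f x - a|) (Filter.Eventually.of_forall fun x => abs_nonneg _) hai (a - α)
    have h3 : V ≤ 2 * (volume.restrict Q).real {x | a - α ≤ |f x - a|} := by
      have h4 : volume (Q \ {x ∈ Q0 n | α < f x}) ≤
          (volume.restrict Q) {x | a - α ≤ |f x - a|} := by
        refine le_trans ?_ (Measure.le_restrict_apply _ _)
        refine measure_mono fun x hx => ⟨?_, hx.1⟩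
        have : f x ≤ α := by
          by_contra! hh
          exact hx.2 ⟨hs hx.1, hh⟩
        show a - α ≤ |f x - a|
        rw [abs_sub_comm]
        exact le_trans (by linarith) (le_abs_self _)
      have h5 : volume Q ≤ volume ({x ∈ Q0 n | α < f x} ∩ Q) +
          volume (Q \ {x ∈ Q0 n | α < f x}) := by
        rw [Set.inter_comm]; exact measure_le_inter_add_sdiff _ _ _
      have f1 : volume ({x ∈ Q0 n | α < f x} ∩ Q) ≠ ⊤ :=
        ne_top_of_le_ne_top hfin (measure_mono Set.inter_subset_right)
      have f2 : (volume.restrict Q) {x | a - α ≤ |f x - a|} ≠ ⊤ := by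
        have : IsFiniteMeasure (volume.restrict Q) := ⟨by simpa using hfin.lt_top⟩
        exact measure_ne_top _ _
      have h6 := ENNReal.toReal_mono (ENNReal.add_ne_top.2 ⟨f1, f2⟩) (h5.trans (add_le_add_right h4 _))
      rw [ENNReal.toReal_add f1 f2, ← hV] at h6
      have h7 := ENNReal.toReal_mono hfin hE
      rw [ENNReal.toReal_mul, ← hV] at h7
      simp only [ENNReal.toReal_ofNat] at h7
      rw [measureReal_def]
      linarith
    nlinarith
  linarith

lemma cube_est' {α : ℝ} {k : ℕ} {m : Fin n → ℕ} (hm : ∀ i, m i < 2 ^ k) {σ : ℝ}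
    (hσ : ((2:ℝ) ^ k)⁻¹ ≤ σ)
    (hE : 2 * volume ({x ∈ Q0 n | α < f x} ∩ hC n k m) ≤ volume (hC n k m)) :
    ∫⁻ x in hC n k m, ENNReal.ofReal (f x - α) ≤
      ENNReal.ofReal (3 * vGR f σ) * ∫⁻ x in hC n k m, ENNReal.ofReal (f x) := by
  have hae := hC_ae n k m
  have hfin : volume (cC n k m) ≠ ⊤ := by rw [vol_cC]; exact ENNReal.ofReal_ne_top
  rw [Measure.restrict_congr_set hae]
  rw [measure_congr hae, measure_congr ((Filter.EventuallyEq.refl _ _).inter hae)] at hE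
  have hest := cube_est hf h0 hm hσ hE
  have hs := cC_sub hm
  have hfi : IntegrableOn f (cC n k m) := hf.mono_set hs
  have hmeas : MeasurableSet (cC n k m) := measurableSet_Icc
  have hmi : IntegrableOn (fun x => max (f x - α) 0) (cC n k m) :=
    (hfi.sub (integrableOn_const hfin : IntegrableOn (fun _ => α) (cC n k m) volume)).pos_part
  have hv := v_nonneg hf h0 σ
  have e1 : ∀ x, ENNReal.ofReal (f x - α) = ENNReal.ofReal (max (f x - α) 0) := fun x => by
    rcases le_total (f x - α) 0 with h | h
    · rw [max_eq_right h, ENNReal.ofReal_of_nonpos h, ENNReal.ofReal_zero]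
    · rw [max_eq_left h]
  simp only [e1]
  rw [← ofReal_integral_eq_lintegral_ofReal hmi
      (Filter.Eventually.of_forall fun x => le_max_right _ _),
    ← ofReal_integral_eq_lintegral_ofReal hfi ?_, ← ENNReal.ofReal_mul (by positivity)]
  · exact ENNReal.ofReal_le_ofReal hest
  · exact (ae_restrict_iff' hmeas).2 (Filter.Eventually.of_forall fun x hx => h0 x (hs hx))

end core

lemma dense_ae {n : ℕ} (E : Set (Fin n → ℝ)) : ∀ᵐ x ∂(volume.restrict E),
    (∀ i, 0 ≤ x i ∧ x i < 1) → ∃ k m, (∀ i, m i < 2 ^ k) ∧ x ∈ hC n k m ∧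
      volume (hC n k m) < 2 ^ (n + 1) * volume (E ∩ hC n k m) := by
  filter_upwards [IsUnifLocDoublingMeasure.ae_tendsto_measure_inter_div volume E 1] with x hx hx1
  choose m hm hxm using fun k => hC_exists n k hx1
  have hlim : Filter.Tendsto (fun k : ℕ => (((2:ℝ) ^ (k+1))⁻¹)) Filter.atTop
      (nhdsWithin 0 (Set.Ioi 0)) := by
    refine tendsto_nhdsWithin_iff.2 ⟨?_, Filter.Eventually.of_forall fun k => ?_⟩
    · have := (tendsto_pow_atTop_nhds_zero_of_lt_one (r := (2:ℝ)⁻¹) (by norm_num)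
        (by norm_num)).comp (Filter.tendsto_add_atTop_nat 1)
      refine this.congr fun k => ?_
      simp [inv_pow]
    · show (0:ℝ) < _
      positivity
  have ht := hx (l := Filter.atTop) (fun k i => ((m k i : ℝ) + 2⁻¹) / 2 ^ k) _ hlim
    (Filter.Eventually.of_forall fun k => by
      rw [one_mul, ← cC_ball]; exact hC_sub_cC _ _ _ (hxm k))
  have hlt : ((2:ENNReal) ^ (n+1))⁻¹ < 1 := by
    rw [ENNReal.inv_lt_one]
    exact one_lt_pow₀ (by norm_num) (by omega)
  obtain ⟨k, hk⟩ := (ht.eventually (lt_mem_nhds hlt)).exists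
  rw [← cC_ball] at hk
  refine ⟨k, m k, hm k, hxm k, ?_⟩
  have hae := hC_ae n k (m k)
  rw [measure_congr hae, measure_congr ((Filter.EventuallyEq.refl _ E).inter hae)]
  have hfin : volume (cC n k (m k)) ≠ ⊤ := by rw [vol_cC]; exact ENNReal.ofReal_ne_top
  have hpos : volume (cC n k (m k)) ≠ 0 := by
    rw [vol_cC]; simp
  rw [ENNReal.lt_div_iff_mul_lt (Or.inl hpos) (Or.inl hfin)] at hk
  have := ENNReal.mul_lt_mul_right (a := (2:ENNReal)^(n+1)) (by positivity) (by simp) hk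
  rwa [← mul_assoc, ENNReal.mul_inv_cancel (by positivity) (by simp), one_mul] at this

section core2
variable {n : ℕ} {f : (Fin n → ℝ) → ℝ} (hf : IntegrableOn f (Q0 n)) (h0 : ∀ x ∈ Q0 n, 0 ≤ f x)
include hf h0

lemma core_est (hn : 1 ≤ n) {α : ℝ} (i : ℕ)
    (hE : volume {x ∈ Q0 n | α < f x} ≤ ENNReal.ofReal (((2:ℝ) ^ (n * (i+2)))⁻¹)) :
    ∃ U ⊆ Q0 n, MeasurableSet U ∧
      volume U ≤ 2 ^ (n+1) * ENNReal.ofReal (((2:ℝ) ^ (n * (i+2)))⁻¹) ∧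
      ∫⁻ x in Q0 n, ENNReal.ofReal (f x - α) ≤
        ENNReal.ofReal (3 * vGR f (((2:ℝ) ^ i)⁻¹)) * ∫⁻ x in U, ENNReal.ofReal (f x) := by
  set E := {x ∈ Q0 n | α < f x} with hEdef
  have two : ((2:ENNReal)) = ENNReal.ofReal 2 := by simp
  set dense : ℕ → (Fin n → ℕ) → Prop := fun k m =>
    volume (hC n k m) < 2 ^ (n + 1) * volume (E ∩ hC n k m) with hdense
  set S : Set (ℕ × (Fin n → ℕ)) := {p | (∀ i, p.2 i < 2 ^ p.1) ∧ dense p.1 p.2 ∧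
    ∀ j < p.1, ∀ m', (∀ i, m' i < 2 ^ j) → hC n p.1 p.2 ⊆ hC n j m' → ¬ dense j m'} with hS
  set C : ℕ × (Fin n → ℕ) → Set (Fin n → ℝ) := fun p => hC n p.1 p.2 with hCdef
  have hCm : ∀ p, MeasurableSet (C p) := fun p => hC_meas _ _ _
  have hd : S.PairwiseDisjoint C := by
    have key : ∀ p ∈ S, ∀ q ∈ S, p.1 ≤ q.1 → ∀ x, x ∈ C p → x ∈ C q → p = q := by
      intro p hp q hq hpq x hxp hxq
      have hsub := hC_nested hpq hxq hxp
      rcases hpq.lt_or_eq with h | h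
      · exact absurd hp.2.1 (hq.2.2 _ h _ hp.1 hsub)
      · obtain ⟨k, m⟩ := p
        obtain ⟨k', m'⟩ := q
        dsimp at h
        subst h
        congr 1
        ext i
        have h1 := mem_hC.1 hxp i
        have h2 := mem_hC.1 hxq i
        dsimp at h1 h2
        have a1 : (m i : ℝ) < m' i + 1 := by linarith
        have a2 : (m' i : ℝ) < m i + 1 := by linarith
        have b1 : m i < m' i + 1 := by exact_mod_cast a1
        have b2 : m' i < m i + 1 := by exact_mod_cast a2
        omega
    intro p hp q hq hpq
    refine Set.disjoint_left.2 fun x hxp hxq => hpq ?_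
    rcases le_total p.1 q.1 with h | h
    · exact key p hp q hq h x hxp hxq
    · exact (key q hq p hp h x hxq hxp).symm
  have hlev : ∀ p ∈ S, i ≤ p.1 := by
    intro p hp
    by_contra! hlt
    have h1 : volume (hC n p.1 p.2) < 2 ^ (n + 1) * ENNReal.ofReal (((2:ℝ) ^ (n * (i+2)))⁻¹) :=
      lt_of_lt_of_le hp.2.1 (by
        gcongr
        exact (measure_mono Set.inter_subset_left).trans hE)
    rw [vol_hC, two, ← ENNReal.ofReal_pow (by norm_num), ← ENNReal.ofReal_mul (by positivity),
      ENNReal.ofReal_lt_ofReal_iff (by positivity)] at h1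
    have h2 : (2:ℝ) ^ (n+1) * 2 ^ (n * p.1) ≤ 2 ^ (n * (i+2)) := by
      rw [← pow_add]
      refine pow_le_pow_right₀ (by norm_num) ?_
      nlinarith
    rw [← div_eq_mul_inv, inv_eq_one_div, div_lt_div_iff₀ (by positivity) (by positivity)] at h1
    linarith
  have hhalf : ∀ p ∈ S, 2 * volume (E ∩ C p) ≤ volume (C p) := by
    rintro ⟨k, m⟩ hp
    rcases k with _ | k
    · exfalso
      have h1 : volume (hC n 0 m) < 2 ^ (n + 1) * ENNReal.ofReal (((2:ℝ) ^ (n * (i+2)))⁻¹) :=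
        lt_of_lt_of_le hp.2.1 (by
          gcongr
          exact (measure_mono Set.inter_subset_left).trans hE)
      rw [vol_hC, two, ← ENNReal.ofReal_pow (by norm_num), ← ENNReal.ofReal_mul (by positivity),
        ENNReal.ofReal_lt_ofReal_iff (by positivity)] at h1
      have h2 : (2:ℝ) ^ (n+1) ≤ 2 ^ (n * (i+2)) := by
        refine pow_le_pow_right₀ (by norm_num) ?_
        nlinarith
      rw [← div_eq_mul_inv, inv_eq_one_div, div_lt_div_iff₀ (by positivity) (by positivity)] at h1
      simp at h1
      linarith
    · -- parent
      have hm := hp.1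
      dsimp at hm
      have hpar : ∀ j, m j / 2 < 2 ^ k := fun j => by
        have := hm j; rw [pow_succ] at this; omega
      have hsub : hC n (k+1) m ⊆ hC n k (fun j => m j / 2) := by
        intro y hy
        rw [mem_hC] at *
        intro j
        obtain ⟨h1, h2⟩ := hy j
        rw [pow_succ] at h1 h2
        have a1 : 2 * (m j / 2) ≤ m j := by omega
        have a2 : m j + 1 ≤ 2 * (m j / 2) + 2 := by omega
        have a1' : 2 * ((m j / 2 : ℕ) : ℝ) ≤ m j := by exact_mod_cast a1
        have a2' : (m j : ℝ) + 1 ≤ 2 * ((m j / 2 : ℕ) : ℝ) + 2 := by exact_mod_cast a2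
        constructor <;> linarith
      have hnd := hp.2.2 k (Nat.lt_succ_self k) _ hpar hsub
      simp only [hdense, not_lt] at hnd
      have h1 : 2 ^ (n+1) * volume (E ∩ hC n (k+1) m) ≤ 2 ^ n * volume (hC n (k+1) m) := by
        calc _ ≤ 2 ^ (n+1) * volume (E ∩ hC n k (fun j => m j / 2)) := by gcongr
          _ ≤ _ := hnd
          _ = _ := by
            rw [vol_hC, vol_hC, two, ← ENNReal.ofReal_pow (by norm_num),
              ← ENNReal.ofReal_mul (by positivity)]
            congr 1
            rw [mul_add, pow_add, mul_one]
            field_simp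
      rw [pow_succ, mul_assoc] at h1
      exact (ENNReal.mul_le_mul_iff_right (by positivity) (by simp)).1 h1
  have hUsub : (⋃ p ∈ S, C p) ⊆ Q0 n := by
    refine Set.iUnion₂_subset fun p hp => (hC_sub_cC _ _ _).trans (cC_sub hp.1)
  have hUm : MeasurableSet (⋃ p ∈ S, C p) :=
    MeasurableSet.biUnion S.to_countable fun p _ => hCm p
  refine ⟨⋃ p ∈ S, C p, hUsub, hUm, ?_, ?_⟩
  · have := cmp_measures volume ((2:ENNReal) ^ (n+1) • volume.restrict E) S C hd hCm fun p hp => by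
      rw [Measure.smul_apply, Measure.restrict_apply (hCm p), smul_eq_mul, Set.inter_comm]
      exact hp.2.1.le
    refine this.trans ?_
    rw [Measure.smul_apply, Measure.restrict_apply hUm, smul_eq_mul]
    gcongr
    exact (measure_mono Set.inter_subset_right).trans hE
  · have h1 := cmp_measures (volume.withDensity fun x => ENNReal.ofReal (f x - α))
      (ENNReal.ofReal (3 * vGR f (((2:ℝ) ^ i)⁻¹)) • volume.withDensity fun x => ENNReal.ofReal (f x))
      S C hd hCm fun p hp => by
        rw [Measure.smul_apply, withDensity_apply _ (hCm p), withDensity_apply _ (hCm p),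
          smul_eq_mul]
        refine cube_est' hf h0 hp.1 ?_ (hhalf p hp)
        have := hlev p hp
        gcongr
        norm_num
    rw [Measure.smul_apply, withDensity_apply _ hUm, withDensity_apply _ hUm, smul_eq_mul] at h1
    refine le_trans ?_ h1
    rw [← lintegral_indicator hUm, ← lintegral_indicator (by exact measurableSet_Icc)]
    refine lintegral_mono_ae ?_
    have hQ : (Set.pi Set.univ (fun _ : Fin n => Set.Ico (0:ℝ) 1)) =ᵐ[volume] Q0 n :=
      Measure.univ_pi_Ico_ae_eq_Icc
    have hden := ae_imp_of_ae_restrict (dense_ae E)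
    filter_upwards [hden, hQ.mem_iff] with x hx hxQ
    by_cases hxU : x ∈ ⋃ p ∈ S, C p
    · rw [Set.indicator_of_mem hxU, Set.indicator_of_mem (hUsub hxU)]
    rw [Set.indicator_of_notMem hxU]
    by_cases hx0 : x ∈ Q0 n
    swap
    · rw [Set.indicator_of_notMem hx0]
    rw [Set.indicator_of_mem hx0]
    by_contra! hpos
    have hxα : α < f x := by
      by_contra! h
      rw [ENNReal.ofReal_of_nonpos (by linarith)] at hpos
      exact lt_irrefl _ hpos
    have hx01 : ∀ i, 0 ≤ x i ∧ x i < 1 := by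
      simpa using hxQ.2 hx0
    have hex := hx ⟨hx0, hxα⟩ hx01
    classical
    obtain ⟨m, hm, hxm, hdn⟩ := Nat.find_spec hex
    refine hxU (Set.mem_iUnion₂.2 ⟨(Nat.find hex, m), ⟨hm, hdn, fun j hj m' hm' hsub hdn' => ?_⟩, hxm⟩)
    exact Nat.find_min hex hj ⟨m', hm', hsub hxm, hdn'⟩

end core2

set_option linter.unusedSectionVars false

section rearr
variable {n : ℕ} {f : (Fin n → ℝ) → ℝ} {g : ℝ → ℝ} (hf : IntegrableOn f (Q0 n))
  (h0 : ∀ x ∈ Q0 n, 0 ≤ f x) (hR : IsRearrangement (fun x => |f x|) g)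
include hf h0 hR

lemma equi (lam : ℝ) : volume {t ∈ Set.Ioc (0:ℝ) 1 | lam < g t} =
    volume {x ∈ Q0 n | lam < f x} := by
  rw [hR.2.2 lam]
  congr 1
  ext x
  simp only [Set.mem_ofPred_eq]
  refine and_congr_right fun hx => ?_
  rw [abs_of_nonneg (h0 x hx)]

lemma layer (α : ℝ) : ∫⁻ u in Set.Ioc (0:ℝ) 1, ENNReal.ofReal (g u - α) =
    ∫⁻ x in Q0 n, ENNReal.ofReal (f x - α) := by
  have e1 : ∀ y : ℝ, ENNReal.ofReal (y - α) = ENNReal.ofReal (max (y - α) 0) := fun y => by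
    rcases le_total (y - α) 0 with h | h
    · rw [max_eq_right h, ENNReal.ofReal_of_nonpos h, ENNReal.ofReal_zero]
    · rw [max_eq_left h]
  simp only [e1]
  have mg : AEMeasurable g (volume.restrict (Set.Ioc (0:ℝ) 1)) :=
    aemeasurable_restrict_of_antitoneOn measurableSet_Ioc hR.1
  have mf : AEMeasurable f (volume.restrict (Q0 n)) := hf.aemeasurable
  rw [lintegral_eq_lintegral_meas_lt (f := fun u => max (g u - α) 0) _
      (Filter.Eventually.of_forall fun x => le_max_right _ _)
      ((mg.sub_const α).max aemeasurable_const),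
    lintegral_eq_lintegral_meas_lt (f := fun u => max (f u - α) 0) _
      (Filter.Eventually.of_forall fun x => le_max_right _ _)
      ((mf.sub_const α).max aemeasurable_const)]
  refine setLIntegral_congr_fun measurableSet_Ioi fun s hs => ?_
  have hs : 0 < s := hs
  rw [Measure.restrict_apply' measurableSet_Ioc,
    Measure.restrict_apply' (by exact measurableSet_Icc)]
  have := equi hf h0 hR (α + s)
  have k : ∀ y : ℝ, s < max (y - α) 0 ↔ α + s < y := fun y => by
    rw [lt_max_iff]
    constructor
    · rintro (h | h) <;> linarith
    · intro h; left; linarith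
  convert this using 2
  · ext x; simp only [Set.mem_inter_iff, Set.mem_ofPred_eq, k]; tauto
  · ext x; simp only [Set.mem_inter_iff, Set.mem_ofPred_eq, k]; tauto

lemma vol_gt {t : ℝ} (ht : t ∈ Set.Ioc (0:ℝ) 1) :
    volume {x ∈ Q0 n | g t < f x} ≤ ENNReal.ofReal t := by
  rw [← equi hf h0 hR]
  have : volume (Set.Ioc (0:ℝ) t) = ENNReal.ofReal t := by simp
  rw [← this]
  refine measure_mono fun u hu => ⟨hu.1.1, ?_⟩
  by_contra! h
  exact absurd hu.2 (not_lt.2 (hR.1 ht hu.1 h.le))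

lemma volQ0 : volume (Q0 n) = 1 := by
  unfold Q0
  rw [Real.volume_Icc_pi]; simp

lemma g_nonneg {t : ℝ} (ht : t ∈ Set.Ioo (0:ℝ) 1) : 0 ≤ g t := by
  by_contra! h
  have h1 := vol_gt hf h0 hR (t := t) ⟨ht.1, ht.2.le⟩
  have h2 : {x ∈ Q0 n | g t < f x} = Q0 n := by
    ext x; simp only [Set.mem_ofPred_eq, and_iff_left_iff_imp]
    intro hx; exact lt_of_lt_of_le h (h0 x hx)
  rw [h2, volQ0 hf h0 hR, ← ENNReal.ofReal_one, ENNReal.ofReal_le_ofReal_iff ht.1.le] at h1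
  linarith [ht.2]

lemma g_ae : ∀ᵐ u ∂(volume.restrict (Set.Ioc (0:ℝ) 1)), 0 ≤ g u := by
  rw [← Measure.restrict_congr_set (Ioo_ae_eq_Ioc (a := (0:ℝ)) (b := 1))]
  exact (ae_restrict_iff' measurableSet_Ioo).2
    (Filter.Eventually.of_forall fun u hu => g_nonneg hf h0 hR hu)

lemma f_ae : ∀ᵐ x ∂(volume.restrict (Q0 n)), 0 ≤ f x :=
  (ae_restrict_iff' (by exact measurableSet_Icc)).2
    (Filter.Eventually.of_forall fun u hu => h0 u hu)

lemma lint_g : ∫⁻ u in Set.Ioc (0:ℝ) 1, ENNReal.ofReal (g u) =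
    ENNReal.ofReal (∫ x in Q0 n, f x) := by
  have := layer hf h0 hR 0
  simp only [sub_zero] at this
  rw [this, ofReal_integral_eq_lintegral_ofReal hf (f_ae hf h0 hR)]

lemma g_int : IntegrableOn g (Set.Ioc (0:ℝ) 1) := by
  have mg : AEMeasurable g (volume.restrict (Set.Ioc (0:ℝ) 1)) :=
    aemeasurable_restrict_of_antitoneOn measurableSet_Ioc hR.1
  refine ⟨mg.aestronglyMeasurable, ?_⟩
  rw [hasFiniteIntegral_iff_ofReal (g_ae hf h0 hR), lint_g hf h0 hR]
  exact ENNReal.ofReal_lt_top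

lemma int_g : ∫ u in Set.Ioc (0:ℝ) 1, g u = ∫ x in Q0 n, f x := by
  have h1 := lint_g hf h0 hR
  rw [← ofReal_integral_eq_lintegral_ofReal (g_int hf h0 hR) (g_ae hf h0 hR)] at h1
  exact (ENNReal.ofReal_eq_ofReal_iff (integral_nonneg_of_ae (g_ae hf h0 hR))
    (integral_nonneg_of_ae (f_ae hf h0 hR))).1 h1

lemma g_int' {a b : ℝ} (ha : 0 ≤ a) (hb : b ≤ 1) : IntegrableOn g (Set.Ioc a b) :=
  (g_int hf h0 hR).mono_set (Set.Ioc_subset_Ioc ha hb)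

lemma int_sub {t α : ℝ} (ht : t ∈ Set.Ioc (0:ℝ) 1) :
    ∫ u in Set.Ioc (0:ℝ) t, (g u - α) = (∫ u in Set.Ioc (0:ℝ) t, g u) - α * t := by
  rw [integral_sub (g_int' hf h0 hR le_rfl ht.2) (integrableOn_const (by simp)), setIntegral_const]
  simp [measureReal_def, ht.1.le, mul_comm]

lemma P_eq {t : ℝ} (ht : t ∈ Set.Ioc (0:ℝ) 1) : ∫⁻ x in Q0 n, ENNReal.ofReal (f x - g t) =
    ENNReal.ofReal ((∫ u in Set.Ioc (0:ℝ) t, g u) - g t * t) := by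
  rw [← layer hf h0 hR, ← int_sub hf h0 hR ht,
    ofReal_integral_eq_lintegral_ofReal (f := fun u => g u - g t) ((g_int' hf h0 hR le_rfl ht.2).sub
      (integrableOn_const (by simp))) ?_]
  · rw [← lintegral_indicator measurableSet_Ioc, ← lintegral_indicator measurableSet_Ioc]
    congr 1
    ext u
    by_cases hu : u ∈ Set.Ioc 0 t
    · rw [Set.indicator_of_mem hu, Set.indicator_of_mem
        (show u ∈ Set.Ioc (0:ℝ) 1 from ⟨hu.1, hu.2.trans ht.2⟩)]
    · rw [Set.indicator_of_notMem hu]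
      by_cases hu1 : u ∈ Set.Ioc (0:ℝ) 1
      · rw [Set.indicator_of_mem hu1]
        have htu : t ≤ u := by
          by_contra! h
          exact hu ⟨hu1.1, h.le⟩
        exact ENNReal.ofReal_of_nonpos (sub_nonpos.2 (hR.1 ht hu1 htu))
      · rw [Set.indicator_of_notMem hu1]
  · refine (ae_restrict_iff' measurableSet_Ioc).2 (Filter.Eventually.of_forall fun u hu => ?_)
    exact sub_nonneg.2 (hR.1 ⟨hu.1, hu.2.trans ht.2⟩ ht hu.2)

lemma P_nonneg {t : ℝ} (ht : t ∈ Set.Ioc (0:ℝ) 1) :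
    0 ≤ (∫ u in Set.Ioc (0:ℝ) t, g u) - g t * t := by
  rw [← int_sub hf h0 hR ht]
  refine setIntegral_nonneg measurableSet_Ioc fun u hu => ?_
  exact sub_nonneg.2 (hR.1 ⟨hu.1, hu.2.trans ht.2⟩ ht hu.2)

lemma hardy_anti {s t : ℝ} (hs : 0 < s) (hst : s ≤ t) (ht : t ≤ 1) :
    hardyAvg g t ≤ hardyAvg g s := by
  have ht0 : 0 < t := hs.trans_le hst
  have hP := P_nonneg hf h0 hR (t := s) ⟨hs, hst.trans ht⟩
  have h1 : ∫ u in Set.Ioc (0:ℝ) t, g u =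
      (∫ u in Set.Ioc (0:ℝ) s, g u) + ∫ u in Set.Ioc s t, g u := by
    rw [← Set.Ioc_union_Ioc_eq_Ioc hs.le hst]
    refine setIntegral_union ?_ measurableSet_Ioc (g_int' hf h0 hR le_rfl (hst.trans ht))
      (g_int' hf h0 hR hs.le ht)
    exact Set.disjoint_left.2 fun x hx hx' => absurd hx'.1 (not_lt.2 hx.2)
  have h2 : ∫ u in Set.Ioc s t, g u ≤ ∫ u in Set.Ioc s t, g s := by
    refine setIntegral_mono_on (g_int' hf h0 hR hs.le ht) (integrableOn_const (by simp))
      measurableSet_Ioc fun u hu => ?_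
    exact hR.1 ⟨hs, hst.trans ht⟩ ⟨hs.trans hu.1, hu.2.trans ht⟩ hu.1.le
  rw [setIntegral_const, measureReal_def, Real.volume_Ioc,
    ENNReal.toReal_ofReal (by linarith), smul_eq_mul] at h2
  unfold hardyAvg
  rw [inv_mul_eq_div, inv_mul_eq_div, div_le_div_iff₀ ht0 hs, h1]
  nlinarith

lemma step (hn : 1 ≤ n) (i : ℕ) : hardyAvg g (((2:ℝ) ^ (n * (i+3)))⁻¹) ≤
    (1 + 3 * 2 ^ (2*n+1) * vGR f (((2:ℝ) ^ i)⁻¹)) * hardyAvg g (((2:ℝ) ^ (n * (i+2)))⁻¹) := by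
  set t := ((2:ℝ) ^ (n * (i+2)))⁻¹ with htdef
  have ht0 : 0 < t := by positivity
  have ht1 : t < 1 := inv_lt_one_of_one_lt₀ (one_lt_pow₀ (by norm_num) (by positivity))
  have htm : t ∈ Set.Ioc (0:ℝ) 1 := ⟨ht0, ht1.le⟩
  have hα := g_nonneg hf h0 hR (t := t) ⟨ht0, ht1⟩
  have hv := v_nonneg hf h0 (((2:ℝ) ^ i)⁻¹)
  obtain ⟨U, hU, hUm, hUv, hest⟩ := core_est hf h0 hn i (vol_gt hf h0 hR htm)
  rw [← htdef] at hUv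
  set v := vGR f (((2:ℝ) ^ i)⁻¹) with hvdef
  set α := g t with hαdef
  have hPn := P_nonneg hf h0 hR htm
  have hPe := P_eq hf h0 hR htm
  set p := (∫ u in Set.Ioc (0:ℝ) t, g u) - g t * t with hp
  have h1 : ∫⁻ x in U, ENNReal.ofReal (f x) ≤
      ENNReal.ofReal (p + α * (2 ^ (n+1) * t)) := by
    calc ∫⁻ x in U, ENNReal.ofReal (f x)
        ≤ ∫⁻ x in U, (ENNReal.ofReal (f x - α) + ENNReal.ofReal α) := by
          refine lintegral_mono fun x => ?_
          refine le_trans (ENNReal.ofReal_le_ofReal (by linarith)) ENNReal.ofReal_add_le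
      _ = (∫⁻ x in U, ENNReal.ofReal (f x - α)) + ENNReal.ofReal α * volume U := by
          rw [lintegral_add_right _ measurable_const, setLIntegral_const]
      _ ≤ ENNReal.ofReal p + ENNReal.ofReal α * (2 ^ (n+1) * ENNReal.ofReal t) := by
          gcongr
          rw [← hPe]
          exact lintegral_mono_set hU
      _ = _ := by
          rw [ENNReal.ofReal_add hPn (by positivity), ENNReal.ofReal_mul hα,
            ENNReal.ofReal_mul (by positivity), ENNReal.ofReal_pow (by norm_num)]
          simp
  have h2 : p ≤ 3 * v * (p + α * (2 ^ (n+1) * t)) := by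
    have := hest.trans (mul_le_mul_right h1 _)
    rw [hPe, ← ENNReal.ofReal_mul (by positivity)] at this
    exact (ENNReal.ofReal_le_ofReal_iff (by positivity)).1 this
  set s := ((2:ℝ) ^ (n * (i+3)))⁻¹ with hs
  have hst : t = 2 ^ n * s := by
    rw [htdef, hs, show n * (i+3) = n * (i+2) + n by ring, pow_add]; field_simp
  have hs0 : 0 < s := by positivity
  have h2n : (1:ℝ) ≤ 2 ^ n := one_le_pow₀ (by norm_num)
  have hsle : s ≤ t := by rw [hst]; nlinarith
  have hsm : s ∈ Set.Ioc (0:ℝ) 1 := ⟨hs0, hsle.trans ht1.le⟩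
  have h3 : (∫ u in Set.Ioc (0:ℝ) s, g u) - α * s ≤ p := by
    rw [hp, ← int_sub hf h0 hR hsm, ← int_sub hf h0 hR htm]
    refine setIntegral_mono_set ((g_int' hf h0 hR le_rfl ht1.le).sub
      (integrableOn_const (by simp))) ?_ (Set.Ioc_subset_Ioc_right hsle).eventuallyLE
    refine (ae_restrict_iff' measurableSet_Ioc).2 (Filter.Eventually.of_forall fun u hu => ?_)
    exact sub_nonneg.2 (hR.1 ⟨hu.1, hu.2.trans ht1.le⟩ htm hu.2)
  have hF : hardyAvg g t * t = ∫ u in Set.Ioc (0:ℝ) t, g u := by unfold hardyAvg; field_simp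
  have hFs : hardyAvg g s * s = ∫ u in Set.Ioc (0:ℝ) s, g u := by unfold hardyAvg; field_simp
  rw [← hFs] at h3
  rw [← hF] at hp
  set F := hardyAvg g t
  set G := hardyAvg g s
  have hαF : α ≤ F := by
    have : 0 ≤ (F - α) * t := by rw [hp] at hPn; linarith
    nlinarith [(mul_nonneg_iff_of_pos_right ht0).1 this]
  have h2n1 : (1:ℝ) ≤ 2 ^ (n+1) := one_le_pow₀ (by norm_num)
  have h4 : p ≤ 3 * v * (2 ^ (n+1) * F * t) := by
    refine h2.trans ?_
    gcongr
    rw [hp]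
    have : 0 ≤ (2 ^ (n+1) - 1) * (F - α) * t :=
      mul_nonneg (mul_nonneg (by linarith) (by linarith)) ht0.le
    linarith
  have h5 : (G - α) * s ≤ (3 * v * 2 ^ (2*n+1) * F) * s := by
    have : 3 * v * (2 ^ (n+1) * F * t) = (3 * v * 2 ^ (2*n+1) * F) * s := by
      rw [hst]; ring
    linarith
  have h6 := le_of_mul_le_mul_right h5 hs0
  linarith

lemma iter (hn : 1 ≤ n) (J : ℕ) : hardyAvg g (((2:ℝ) ^ (n * (J+2)))⁻¹) ≤
    hardyAvg g (((2:ℝ) ^ (n * 2))⁻¹) *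
      Real.exp (3 * 2 ^ (2*n+1) * ∑ j ∈ Finset.range J, vGR f (((2:ℝ) ^ j)⁻¹)) := by
  have hnn : ∀ J : ℕ, 0 ≤ hardyAvg g (((2:ℝ) ^ (n * (J+2)))⁻¹) := fun J => by
    have ht0 : 0 < ((2:ℝ) ^ (n * (J+2)))⁻¹ := by positivity
    have ht1 : ((2:ℝ) ^ (n * (J+2)))⁻¹ < 1 :=
      inv_lt_one_of_one_lt₀ (one_lt_pow₀ (by norm_num) (by positivity))
    unfold hardyAvg
    refine mul_nonneg (by positivity) (setIntegral_nonneg measurableSet_Ioc fun u hu => ?_)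
    exact g_nonneg hf h0 hR ⟨hu.1, lt_of_le_of_lt hu.2 ht1⟩
  induction J with
  | zero => simp
  | succ J ih =>
    rw [Finset.sum_range_succ, mul_add (3 * 2 ^ (2*n+1) : ℝ), Real.exp_add, ← mul_assoc]
    refine (step hf h0 hR hn J).trans ?_
    rw [mul_comm]
    have := Real.add_one_le_exp (3 * 2 ^ (2*n+1) * vGR f (((2:ℝ) ^ J)⁻¹))
    have hv := v_nonneg hf h0 (((2:ℝ) ^ J)⁻¹)
    refine mul_le_mul ih (by linarith) (by positivity) ?_
    exact mul_nonneg (hnn 0) (Real.exp_pos _).le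

end rearr

/-- **Theorem 4.** There are constants `c₁, c₂, c₃, c₄ > 0` depending only on `n`, with
`c₄ > 1`, such that for every integrable `f : [0,1]ⁿ → [0,∞)` and `t ∈ (0, 1/c₄]`,
`f**(t) ≤ c₁ f_{Q₀} exp(c₂ ∫_{c₃ t^{1/n}}^1 v(f;σ) dσ/σ)`. -/
theorem hardy_exponential_bound (n : ℕ) (hn : 1 ≤ n) :
    ∃ c1 c2 c3 c4 : ℝ, 0 < c1 ∧ 0 < c2 ∧ 0 < c3 ∧ 1 < c4 ∧
      ∀ (f : (Fin n → ℝ) → ℝ), IntegrableOn f (Q0 n) → (∀ x ∈ Q0 n, 0 ≤ f x) →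
        ∀ (fstar : ℝ → ℝ), IsRearrangement (fun x => |f x|) fstar →
          ∀ t ∈ Set.Ioc (0:ℝ) (1 / c4),
            hardyAvg fstar t ≤ c1 * avgOn f (Q0 n) *
              Real.exp (c2 * ∫ σ in (c3 * t ^ ((n : ℝ))⁻¹)..(1:ℝ), vGR f σ / σ) := by
  refine ⟨4 ^ n * Real.exp (3 * 2 ^ (2*n+1) * 2), 3 * 2 ^ (2*n+1) * (Real.log 2)⁻¹, 1, 4 ^ n,
    by positivity, ?_, one_pos, one_lt_pow₀ (by norm_num) (by omega), ?_⟩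
  · have := Real.log_pos (show (1:ℝ) < 2 by norm_num)
    positivity
  intro f hf h0 g hR t ht
  obtain ⟨ht0, ht4⟩ := ht
  have hl := Real.log_pos (show (1:ℝ) < 2 by norm_num)
  rw [one_mul]
  set s := t ^ ((n:ℝ))⁻¹ with hs
  have hs0 : 0 < s := Real.rpow_pos_of_pos ht0 _
  have hsn : s ^ n = t := Real.rpow_inv_natCast_pow ht0.le (by omega)
  have hs4 : s ≤ 1 / 4 := by
    refine le_of_pow_le_pow_left₀ (n := n) (by omega) (by norm_num) ?_
    rw [hsn, div_pow, one_pow]; exact ht4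
  have ht1 : t ≤ 1 := by
    rw [← hsn]; exact pow_le_one₀ hs0.le (by linarith)
  obtain ⟨J, hJ1, hJ2⟩ := exists_nat_pow_near_of_lt_one hs0 (by linarith : s ≤ 1)
    (show (0:ℝ) < 2⁻¹ by norm_num) (by norm_num)
  obtain ⟨K, rfl⟩ : ∃ K, J = K + 1 := by
    rcases J with _ | K
    · norm_num at hJ1; linarith
    · exact ⟨K, rfl⟩
  rw [inv_pow] at hJ1 hJ2
  have hle : ((2:ℝ) ^ (n * (K+2)))⁻¹ ≤ t := by
    rw [← hsn, mul_comm n, pow_mul, ← inv_pow]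
    gcongr
  have hsK : s ≤ ((2:ℝ) ^ K)⁻¹ := by
    refine hJ2.trans ?_
    gcongr
    · norm_num
    · omega
  have a1 := hardy_anti hf h0 hR (by positivity) hle ht1
  have a2 := iter hf h0 hR hn K
  have hI := int_g hf h0 hR
  have hav : avgOn f (Q0 n) = ∫ x in Q0 n, f x := by
    unfold avgOn; rw [volQ0 hf h0 hR]; simp
  have a3 : hardyAvg g (((2:ℝ) ^ (n * 2))⁻¹) ≤ 4 ^ n * avgOn f (Q0 n) := by
    unfold hardyAvg
    rw [hav, ← hI, inv_inv, mul_comm n 2, pow_mul]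
    norm_num
    have h1 : ((4:ℝ) ^ n)⁻¹ ≤ 1 := inv_le_one_of_one_le₀ (one_le_pow₀ (by norm_num))
    exact setIntegral_mono_set (g_int hf h0 hR) (g_ae hf h0 hR)
      (Set.Ioc_subset_Ioc_right h1).eventuallyLE
  have hav0 : 0 ≤ avgOn f (Q0 n) := by
    rw [hav]; exact integral_nonneg_of_ae (f_ae hf h0 hR)
  have a4 : ∑ j ∈ Finset.range K, vGR f (((2:ℝ) ^ j)⁻¹) ≤
      2 + (Real.log 2)⁻¹ * ∫ σ in s..1, vGR f σ / σ := by
    have b1 := v_sum hf h0 K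
    rw [Finset.sum_range_succ] at b1
    have b2 := v_nonneg hf h0 (((2:ℝ) ^ K)⁻¹)
    have p1 : (0:ℝ) < (2 ^ K)⁻¹ := by positivity
    have b3 : ∫ σ in (((2:ℝ) ^ K)⁻¹)..1, vGR f σ / σ ≤ ∫ σ in s..1, vGR f σ / σ := by
      rw [← intervalIntegral.integral_add_adjacent_intervals (v_int hf h0 hs0 p1)
        (v_int hf h0 p1 one_pos)]
      have : 0 ≤ ∫ σ in s..(((2:ℝ) ^ K)⁻¹), vGR f σ / σ :=
        intervalIntegral.integral_nonneg hsK fun u hu =>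
          div_nonneg (v_nonneg hf h0 u) (hs0.le.trans hu.1)
      linarith
    have b4 := mul_le_mul_of_nonneg_left b3 (inv_nonneg.2 hl.le)
    linarith
  calc hardyAvg g t ≤ _ := a1.trans a2
    _ ≤ (4 ^ n * avgOn f (Q0 n)) * Real.exp (3 * 2 ^ (2*n+1) *
        (2 + (Real.log 2)⁻¹ * ∫ σ in s..1, vGR f σ / σ)) := by gcongr
    _ = _ := by
      rw [mul_add, Real.exp_add, ← mul_assoc (3 * 2 ^ (2*n+1) : ℝ)]
      ring
end
end
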